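/- arXiv:2501.00299 — 10 statements merged into one kernel-verified Lean document; each statement's English description precedes it below -/
import Mathlib

section
/- Let p > 1 and let μ, ν : {1,2,...} → (0,∞) be positive weights such that B¹_{μ,ν} := sup_{r≥1} (∑_{x=r}^∞ μ(x)) · (∑_{x=1}^r ν(x)^{-1/(p-1)})^{p-1} is finite. Then for every finitely supported function f : {1,2,...} → ℝ one has ∑_{x=1}^∞ |∑_{y=1}^x f(y)|^p μ(x) ≤ (p^p/(p-1)^{p-1}) · B¹_{μ,ν} · ∑_{x=1}^∞ |f(x)|^p ν(x). -/
open scoped ENNReal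

/-!
Put `w = ν ^ (-1 / (p - 1))`, so that `ν = w ^ (1 - p)`, let `W` be the partial sums of `w` and `M`
the tail sums of `μ`, and let `q` be the conjugate exponent of `p`. The discrete power rule for the
concave function `t ↦ t ^ (1 / q)` bounds the partial sums of `w * W ^ (-1 / p)` by
`q * W ^ (1 / q)`, and for `t ↦ t ^ (1 / p)` it bounds the tail sums of `μ * M ^ (-1 / q)` by
`p * M ^ (1 / p)`. Hölder's inequality with weight `w * W ^ (-1 / p)` controls each partial sum of
`f`. After the order of summation is exchanged, the condition `M * W ^ (p - 1) ≤ B` is used once to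
the power `1 / q` and once to the power `1 / p`, which gives the constant `p * q ^ (p - 1) * B`.
-/

open scoped NNReal

lemma mul_rpow_sub_one_eq_rpow_div {p q : ℝ} (hpq : p.HolderConjugate q) :
    p * q ^ (p - 1) = p ^ p / (p - 1) ^ (p - 1) := by
  have hp := hpq.pos
  rw [hpq.conjugate_eq, Real.div_rpow hp.le hpq.sub_one_pos.le, Real.rpow_sub_one hp.ne',
    ← mul_div_assoc, mul_div_cancel₀ _ hp.ne']

lemma rpow_neg_one_div_sub_one_rpow_one_sub {p : ℝ} (hp : p ≠ 1) (x : ℝ≥0) :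
    (x ^ (-1 / (p - 1))) ^ (1 - p) = x := by
  have : p - 1 ≠ 0 := sub_ne_zero.2 hp
  rw [← NNReal.rpow_mul, show -1 / (p - 1) * (1 - p) = 1 by field_simp; ring, NNReal.rpow_one]

lemma mul_rpow_le_rpow_mul_rpow_neg {k M V B : ℝ≥0} {t : ℝ} (ht : 0 ≤ t) (hk : k ≤ M)
    (hB : M * V ≤ B) : k * V ^ t ≤ B ^ t * (k * M ^ (-t)) := by
  obtain rfl | hk0 := eq_or_ne k 0
  · simp
  have hM : M ≠ 0 := fun h => hk0 (le_zero_iff.1 (h ▸ hk))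
  calc k * V ^ t = (M * V) ^ t * (k * M ^ (-t)) := by
        rw [NNReal.mul_rpow, NNReal.rpow_neg]
        have := (NNReal.rpow_pos (p := t) (pos_iff_ne_zero.2 hM)).ne'
        field_simp
    _ ≤ _ := by gcongr

lemma sum_Icc_one_eq_sum_range {α : Type*} [AddCommMonoid α] (g : ℕ → α) (n : ℕ) :
    ∑ y ∈ Finset.Icc 1 n, g y = ∑ y ∈ Finset.range n, g (y + 1) := by
  rw [Finset.range_eq_Ico, Finset.sum_Ico_add' g 0 n 1]
  rfl

section OrderedSums

variable {ι : Type*} [LinearOrder ι] {s : Finset ι} {x y : ι}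

/-- The partial sum of `w` over the elements of `s` up to and including `x`. -/
def lowerSum (s : Finset ι) (w : ι → ℝ≥0) (x : ι) : ℝ≥0 := ∑ y ∈ s with y ≤ x, w y

/-- The tail sum of `w` over the elements of `s` from `x` on, `x` included; it is `lowerSum` for
the reversed order. -/
def upperSum (s : Finset ι) (w : ι → ℝ≥0) (x : ι) : ℝ≥0 := ∑ y ∈ s with x ≤ y, w y

lemma lowerSum_filter_le (w : ι → ℝ≥0) (hyx : y ≤ x) :
    lowerSum (s.filter (· ≤ x)) w y = lowerSum s w y := by
  rw [lowerSum, lowerSum, Finset.filter_filter]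
  congr 1
  grind

lemma lowerSum_insert_of_lt (w : ι → ℝ≥0) (hxy : x < y) :
    lowerSum (insert y s) w x = lowerSum s w x := by
  rw [lowerSum, Finset.filter_insert, if_neg hxy.not_ge, lowerSum]

lemma le_lowerSum (w : ι → ℝ≥0) (hx : x ∈ s) : w x ≤ lowerSum s w x :=
  Finset.single_le_sum (fun _ _ => zero_le) (Finset.mem_filter.2 ⟨hx, le_rfl⟩)

lemma le_upperSum (w : ι → ℝ≥0) (hx : x ∈ s) : w x ≤ upperSum s w x :=
  le_lowerSum (ι := ιᵒᵈ) w hx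

lemma sum_mul_lowerSum_eq_sum_mul_upperSum (s : Finset ι) (a b : ι → ℝ≥0) :
    ∑ x ∈ s, b x * lowerSum s a x = ∑ y ∈ s, a y * upperSum s b y := by
  simp only [lowerSum, upperSum, Finset.mul_sum]
  rw [Finset.sum_comm' (t' := s) (s' := fun y => s.filter (y ≤ ·)) (by grind)]
  exact Finset.sum_congr rfl fun y _ => Finset.sum_congr rfl fun x _ => mul_comm _ _

end OrderedSums

section PowerRule

variable {p q : ℝ≥0}

lemma mul_rpow_inv_add_mul_rpow_neg_inv_le (hpq : p.HolderConjugate q) (b d : ℝ≥0) :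
    p * b ^ (p : ℝ)⁻¹ + d * (b + d) ^ (-(q : ℝ)⁻¹) ≤ p * (b + d) ^ (p : ℝ)⁻¹ := by
  obtain hc | hc := eq_or_ne (b + d) 0
  · obtain ⟨rfl, rfl⟩ := add_eq_zero.1 hc
    simp
  have young : b ^ (p : ℝ)⁻¹ * (b + d) ^ (q : ℝ)⁻¹ ≤ p⁻¹ * b + q⁻¹ * (b + d) := by
    exact_mod_cast
      NNReal.geom_mean_le_arith_mean2_weighted p⁻¹ q⁻¹ b (b + d) hpq.inv_add_inv_eq_one
  have hp := hpq.ne_zero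
  calc p * b ^ (p : ℝ)⁻¹ + d * (b + d) ^ (-(q : ℝ)⁻¹)
      = (p * (b ^ (p : ℝ)⁻¹ * (b + d) ^ (q : ℝ)⁻¹) + d) * (b + d) ^ (-(q : ℝ)⁻¹) := by
        rw [add_mul, mul_assoc p, mul_assoc (b ^ _), ← NNReal.rpow_add hc, add_neg_cancel,
          NNReal.rpow_zero, mul_one]
    _ ≤ (p * (p⁻¹ * b + q⁻¹ * (b + d)) + d) * (b + d) ^ (-(q : ℝ)⁻¹) := by gcongr
    _ = p * ((p⁻¹ + q⁻¹) * ((b + d) * (b + d) ^ (-(q : ℝ)⁻¹))) := by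
        field_simp
        ring
    _ = p * (b + d) ^ (p : ℝ)⁻¹ := by
        rw [hpq.inv_add_inv_eq_one, one_mul, ← hpq.coe.one_sub_inv, neg_sub,
          NNReal.rpow_sub_one hc, mul_div_cancel₀ _ hc]

variable {ι : Type*} [LinearOrder ι]

lemma sum_mul_rpow_lowerSum_le (hpq : p.HolderConjugate q) (s : Finset ι) (w : ι → ℝ≥0) :
    ∑ y ∈ s, w y * lowerSum s w y ^ (-(q : ℝ)⁻¹) ≤ p * (∑ y ∈ s, w y) ^ (p : ℝ)⁻¹ := by
  induction s using Finset.induction_on_max with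
  | empty => simp
  | insert i s hi ih =>
    have hmem : i ∉ s := fun h => (hi i h).false
    have lowerSum_top : lowerSum (insert i s) w i = ∑ y ∈ s, w y + w i := by
      rw [lowerSum, Finset.filter_true_of_mem (by grind), Finset.sum_insert hmem, add_comm]
    have lowerSum_below : ∀ y ∈ s, w y * lowerSum (insert i s) w y ^ (-(q : ℝ)⁻¹) =
        w y * lowerSum s w y ^ (-(q : ℝ)⁻¹) := fun y hy => by
      rw [lowerSum_insert_of_lt w (hi y hy)]
    rw [Finset.sum_insert hmem, Finset.sum_insert hmem, lowerSum_top, add_comm,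
      add_comm (w i), Finset.sum_congr rfl lowerSum_below]
    exact (add_le_add_left ih _).trans (mul_rpow_inv_add_mul_rpow_neg_inv_le hpq _ _)

lemma lowerSum_mul_rpow_lowerSum_le (hpq : p.HolderConjugate q) (s : Finset ι) (w : ι → ℝ≥0)
    (x : ι) :
    lowerSum s (fun y => w y * lowerSum s w y ^ (-(q : ℝ)⁻¹)) x ≤
      p * lowerSum s w x ^ (p : ℝ)⁻¹ := by
  refine le_of_eq_of_le (Finset.sum_congr rfl fun y hy => ?_)
    (sum_mul_rpow_lowerSum_le hpq (s.filter (· ≤ x)) w)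
  rw [lowerSum_filter_le w (Finset.mem_filter.1 hy).2]

lemma upperSum_mul_rpow_upperSum_le (hpq : p.HolderConjugate q) (s : Finset ι) (w : ι → ℝ≥0)
    (x : ι) :
    upperSum s (fun y => w y * upperSum s w y ^ (-(q : ℝ)⁻¹)) x ≤
      p * upperSum s w x ^ (p : ℝ)⁻¹ :=
  lowerSum_mul_rpow_lowerSum_le (ι := ιᵒᵈ) hpq s w x

end PowerRule

lemma rpow_sum_le_rpow_sum_mul_sum {ι : Type*} {p : ℝ} (hp : 1 ≤ p) (s : Finset ι)
    (u a : ι → ℝ≥0) (hu : ∀ i ∈ s, u i ≠ 0) :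
    (∑ i ∈ s, a i) ^ p ≤ (∑ i ∈ s, u i) ^ (p - 1) * ∑ i ∈ s, a i ^ p * u i ^ (1 - p) := by
  have hp0 : p ≠ 0 := by positivity
  calc (∑ i ∈ s, a i) ^ p = (∑ i ∈ s, u i * (a i / u i)) ^ p := by
        rw [Finset.sum_congr rfl fun i hi => mul_div_cancel₀ (a i) (hu i hi)]
    _ ≤ ((∑ i ∈ s, u i) ^ (1 - p⁻¹) * (∑ i ∈ s, u i * (a i / u i) ^ p) ^ p⁻¹) ^ p := by
        gcongr
        exact NNReal.inner_le_weight_mul_Lp s hp u _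
    _ = (∑ i ∈ s, u i) ^ (p - 1) * ∑ i ∈ s, u i * (a i / u i) ^ p := by
        rw [NNReal.mul_rpow, NNReal.rpow_inv_rpow hp0, ← NNReal.rpow_mul, sub_mul, one_mul,
          inv_mul_cancel₀ hp0]
    _ = (∑ i ∈ s, u i) ^ (p - 1) * ∑ i ∈ s, a i ^ p * u i ^ (1 - p) := by
        congr 1
        refine Finset.sum_congr rfl fun i hi => ?_
        rw [NNReal.div_rpow, NNReal.rpow_sub (hu i hi), NNReal.rpow_one]
        ring

section Hardy

variable {p q : ℝ≥0}

lemma lowerSum_rpow_le {ι : Type*} [LinearOrder ι] (hpq : p.HolderConjugate q) (s : Finset ι)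
    (w a : ι → ℝ≥0) (hw : ∀ i ∈ s, w i ≠ 0) (x : ι) :
    lowerSum s a x ^ (p : ℝ) ≤ q ^ (p - 1 : ℝ) * (lowerSum s w x ^ (p - 1 : ℝ)) ^ (q : ℝ)⁻¹ *
      lowerSum s (fun y => a y ^ (p : ℝ) * w y ^ (1 - p : ℝ) * lowerSum s w y ^ (q : ℝ)⁻¹) x := by
  set u : ι → ℝ≥0 := fun y => w y * lowerSum s w y ^ (-(p : ℝ)⁻¹) with hu
  have u_ne_zero : ∀ y ∈ s, u y ≠ 0 := fun y hy => by
    have := ((pos_iff_ne_zero.2 (hw y hy)).trans_le (le_lowerSum w hy)).ne'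
    simp [hu, NNReal.rpow_eq_zero_iff, hw y hy, this]
  have rpow_u (y : ι) : u y ^ (1 - p : ℝ) = w y ^ (1 - p : ℝ) * lowerSum s w y ^ (q : ℝ)⁻¹ := by
    rw [hu, NNReal.mul_rpow, ← NNReal.rpow_mul, ← hpq.coe.one_sub_inv]
    have := hpq.coe.ne_zero
    field_simp
    ring_nf
  calc lowerSum s a x ^ (p : ℝ)
      ≤ lowerSum s u x ^ (p - 1 : ℝ) * lowerSum s (fun y => a y ^ (p : ℝ) * u y ^ (1 - p : ℝ)) x :=
        rpow_sum_le_rpow_sum_mul_sum hpq.coe.lt.le _ u a fun y hy =>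
          u_ne_zero y (Finset.mem_filter.1 hy).1
    _ ≤ (q * lowerSum s w x ^ (q : ℝ)⁻¹) ^ (p - 1 : ℝ) *
          lowerSum s (fun y => a y ^ (p : ℝ) * u y ^ (1 - p : ℝ)) x := by
        gcongr
        · exact hpq.coe.sub_one_pos.le
        · exact lowerSum_mul_rpow_lowerSum_le hpq.symm s w x
    _ = _ := by
        simp only [rpow_u, NNReal.mul_rpow, ← NNReal.rpow_mul, mul_assoc, mul_comm (q : ℝ)⁻¹]

lemma lowerSum_rpow_mul_le {ι : Type*} [LinearOrder ι] (hpq : p.HolderConjugate q) {s : Finset ι}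
    (m w a : ι → ℝ≥0) (hw : ∀ i ∈ s, w i ≠ 0) {x : ι} (hx : x ∈ s) {B : ℝ≥0}
    (hB : upperSum s m x * lowerSum s w x ^ (p - 1 : ℝ) ≤ B) :
    lowerSum s a x ^ (p : ℝ) * m x ≤
      q ^ (p - 1 : ℝ) * B ^ (q : ℝ)⁻¹ * (m x * upperSum s m x ^ (-(q : ℝ)⁻¹) *
        lowerSum s
          (fun y => a y ^ (p : ℝ) * w y ^ (1 - p : ℝ) * lowerSum s w y ^ (q : ℝ)⁻¹) x) := by
  set T := lowerSum s (fun y => a y ^ (p : ℝ) * w y ^ (1 - p : ℝ) * lowerSum s w y ^ (q : ℝ)⁻¹) x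
  calc lowerSum s a x ^ (p : ℝ) * m x
      ≤ q ^ (p - 1 : ℝ) * (lowerSum s w x ^ (p - 1 : ℝ)) ^ (q : ℝ)⁻¹ * T * m x := by
        gcongr
        exact lowerSum_rpow_le hpq s w a hw x
    _ = q ^ (p - 1 : ℝ) * (m x * (lowerSum s w x ^ (p - 1 : ℝ)) ^ (q : ℝ)⁻¹) * T := by ring
    _ ≤ q ^ (p - 1 : ℝ) * (B ^ (q : ℝ)⁻¹ * (m x * upperSum s m x ^ (-(q : ℝ)⁻¹))) * T := by
        gcongr q ^ (p - 1 : ℝ) * ?_ * T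
        exact mul_rpow_le_rpow_mul_rpow_neg hpq.symm.coe.inv_nonneg (le_upperSum m hx) hB
    _ = _ := by ring

theorem sum_lowerSum_rpow_mul_le {ι : Type*} [LinearOrder ι] (hpq : p.HolderConjugate q)
    (s : Finset ι) (m w a : ι → ℝ≥0) (hw : ∀ i ∈ s, w i ≠ 0) {B : ℝ≥0}
    (hB : ∀ r ∈ s, upperSum s m r * lowerSum s w r ^ (p - 1 : ℝ) ≤ B) :
    ∑ x ∈ s, lowerSum s a x ^ (p : ℝ) * m x ≤
      p * q ^ (p - 1 : ℝ) * B * ∑ y ∈ s, a y ^ (p : ℝ) * w y ^ (1 - p : ℝ) := by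
  set M := upperSum s m
  set W := lowerSum s w
  set D : ι → ℝ≥0 := fun y => a y ^ (p : ℝ) * w y ^ (1 - p : ℝ)
  have balance : ∀ y ∈ s, W y ^ (q : ℝ)⁻¹ * M y ^ (p : ℝ)⁻¹ ≤ B ^ (p : ℝ)⁻¹ := fun y hy => by
    have : (q : ℝ)⁻¹ = (p - 1) * (p : ℝ)⁻¹ := by
      rw [← hpq.coe.one_sub_inv, sub_one_mul, mul_inv_cancel₀ hpq.coe.ne_zero]
    rw [this, NNReal.rpow_mul, ← NNReal.mul_rpow, mul_comm]
    gcongr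
    exact hB y hy
  calc ∑ x ∈ s, lowerSum s a x ^ (p : ℝ) * m x
      ≤ q ^ (p - 1 : ℝ) * B ^ (q : ℝ)⁻¹ * ∑ x ∈ s, m x * M x ^ (-(q : ℝ)⁻¹) *
          lowerSum s (fun y => D y * W y ^ (q : ℝ)⁻¹) x := by
        rw [Finset.mul_sum]
        exact Finset.sum_le_sum fun x hx => lowerSum_rpow_mul_le hpq m w a hw hx (hB x hx)
    _ = q ^ (p - 1 : ℝ) * B ^ (q : ℝ)⁻¹ * ∑ y ∈ s, D y * W y ^ (q : ℝ)⁻¹ *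
          upperSum s (fun x => m x * M x ^ (-(q : ℝ)⁻¹)) y := by
        rw [sum_mul_lowerSum_eq_sum_mul_upperSum]
    _ ≤ q ^ (p - 1 : ℝ) * B ^ (q : ℝ)⁻¹ * ∑ y ∈ s, D y * W y ^ (q : ℝ)⁻¹ *
          (p * M y ^ (p : ℝ)⁻¹) := by
        gcongr
        exact upperSum_mul_rpow_upperSum_le hpq s m _
    _ = q ^ (p - 1 : ℝ) * B ^ (q : ℝ)⁻¹ * ∑ y ∈ s, p * D y *
          (W y ^ (q : ℝ)⁻¹ * M y ^ (p : ℝ)⁻¹) := by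
        congr! 2
        ring
    _ ≤ q ^ (p - 1 : ℝ) * B ^ (q : ℝ)⁻¹ * ∑ y ∈ s, p * D y * B ^ (p : ℝ)⁻¹ := by
        gcongr with y hy
        exact balance y hy
    _ = p * q ^ (p - 1 : ℝ) * (B ^ (p : ℝ)⁻¹ * B ^ (q : ℝ)⁻¹) * ∑ y ∈ s, D y := by
        rw [← Finset.sum_mul, ← Finset.mul_sum]
        ring
    _ = p * q ^ (p - 1 : ℝ) * B * ∑ y ∈ s, D y := by
        rw [← NNReal.rpow_add_of_nonneg _ (by positivity) (by positivity),
          hpq.coe.inv_add_inv_eq_one, NNReal.rpow_one]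

lemma lowerSum_range_eq_sum_range (g : ℕ → ℝ≥0) {N r : ℕ} (hr : r ∈ Finset.range N) :
    lowerSum (Finset.range N) g r = ∑ y ∈ Finset.range (r + 1), g y := by
  rw [lowerSum]
  congr 1
  grind

lemma coe_upperSum_range_le_tsum (g : ℕ → ℝ≥0) (N r : ℕ) :
    (upperSum (Finset.range N) g r : ℝ≥0∞) ≤ ∑' x, (g (x + r) : ℝ≥0∞) := by
  have : (Finset.range N).filter (r ≤ ·) = Finset.Ico r N := by grind
  rw [upperSum, this, Finset.sum_Ico_eq_sum_range]
  push_cast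
  simp only [add_comm r]
  exact ENNReal.sum_le_tsum _

theorem tsum_rpow_sum_range_mul_le (hpq : p.HolderConjugate q) (m w a : ℕ → ℝ≥0)
    (hw : ∀ n, w n ≠ 0) {B : ℝ≥0}
    (hB : ∀ r, (∑' x, (m (x + r) : ℝ≥0∞)) *
      (∑ y ∈ Finset.range (r + 1), (w y : ℝ≥0∞)) ^ (p - 1 : ℝ) ≤ B) :
    ∑' x, (((∑ y ∈ Finset.range (x + 1), a y) ^ (p : ℝ) * m x : ℝ≥0) : ℝ≥0∞) ≤
      p * (q ^ (p - 1 : ℝ) : ℝ≥0) * B *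
        ∑' y, ((a y ^ (p : ℝ) * w y ^ (1 - p : ℝ) : ℝ≥0) : ℝ≥0∞) := by
  refine ENNReal.tsum_le_of_sum_range_le fun N => ?_
  have truncated := sum_lowerSum_rpow_mul_le hpq (Finset.range N) m w a (fun i _ => hw i)
    fun r hr => by
      rw [← ENNReal.coe_le_coe, ENNReal.coe_mul,
        ENNReal.coe_rpow_of_nonneg _ hpq.coe.sub_one_pos.le, lowerSum_range_eq_sum_range w hr,
        ENNReal.ofNNReal_finsetSum]
      exact (mul_le_mul_left (coe_upperSum_range_le_tsum m N r) _).trans (hB r)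
  calc ∑ x ∈ Finset.range N, (((∑ y ∈ Finset.range (x + 1), a y) ^ (p : ℝ) * m x : ℝ≥0) : ℝ≥0∞)
      = (∑ x ∈ Finset.range N, lowerSum (Finset.range N) a x ^ (p : ℝ) * m x : ℝ≥0) := by
        rw [ENNReal.ofNNReal_finsetSum]
        exact Finset.sum_congr rfl fun x hx => by rw [lowerSum_range_eq_sum_range a hx]
    _ ≤ _ := ENNReal.coe_le_coe.2 truncated
    _ = p * (q ^ (p - 1 : ℝ) : ℝ≥0) * B * ∑ y ∈ Finset.range N,
          ((a y ^ (p : ℝ) * w y ^ (1 - p : ℝ) : ℝ≥0) : ℝ≥0∞) := by push_cast; rfl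
    _ ≤ _ := by
        gcongr
        exact ENNReal.sum_le_tsum _

end Hardy

theorem stmt_0_general {E : Type*} [SeminormedAddCommGroup E] (p : ℝ) (hp : 1 < p) (μ ν : ℕ → ℝ)
    (hμ : ∀ n, 1 ≤ n → 0 ≤ μ n) (hν : ∀ n, 1 ≤ n → 0 < ν n)
    (B1 : ℝ≥0∞)
    (hB1 : B1 = ⨆ r : ℕ,
      (∑' x : ℕ, ENNReal.ofReal (μ (x + (r + 1)))) *
        (∑ x ∈ Finset.Icc 1 (r + 1), ENNReal.ofReal (ν x ^ (-1 / (p - 1)))) ^ (p - 1))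
    (hB1fin : B1 ≠ ⊤) (f : ℕ → E) :
    ∑' x : ℕ, ENNReal.ofReal (‖∑ y ∈ Finset.Icc 1 (x + 1), f y‖ ^ p * μ (x + 1)) ≤
      ENNReal.ofReal (p ^ p / (p - 1) ^ (p - 1)) * B1 *
        ∑' x : ℕ, ENNReal.ofReal (‖f (x + 1)‖ ^ p * ν (x + 1)) := by
  have hpq := Real.HolderConjugate.conjExponent hp
  rw [← mul_rpow_sub_one_eq_rpow_div hpq]
  generalize p.conjExponent = q at hpq
  lift p to ℝ≥0 using hpq.nonneg
  lift q to ℝ≥0 using hpq.symm.nonneg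
  lift B1 to ℝ≥0 using hB1fin
  obtain ⟨m, hm⟩ : ∃ m : ℕ → ℝ≥0, ∀ n, μ (n + 1) = m n :=
    ⟨fun n => ⟨μ (n + 1), hμ _ n.succ_pos⟩, fun _ => rfl⟩
  obtain ⟨v, hv⟩ : ∃ v : ℕ → ℝ≥0, ∀ n, ν (n + 1) = v n :=
    ⟨fun n => ⟨ν (n + 1), (hν _ n.succ_pos).le⟩, fun _ => rfl⟩
  have v_pos (n : ℕ) : 0 < v n := by exact_mod_cast hv n ▸ hν _ n.succ_pos
  have hardy := tsum_rpow_sum_range_mul_le (NNReal.holderConjugate_coe_iff.1 hpq) m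
    (fun n => v n ^ (-1 / (p - 1) : ℝ)) (fun n => ‖f (n + 1)‖₊)
    (fun n => (NNReal.rpow_pos (v_pos n)).ne') fun r => by
      refine le_of_eq_of_le ?_ (hB1 ▸ le_iSup _ r)
      simp only [sum_Icc_one_eq_sum_range, ← add_assoc, hm, hv, ← NNReal.coe_rpow,
        ENNReal.ofReal_coe_nnreal]
  calc ∑' x : ℕ, ENNReal.ofReal (‖∑ y ∈ Finset.Icc 1 (x + 1), f y‖ ^ (p : ℝ) * μ (x + 1))
      ≤ ∑' x, (((∑ y ∈ Finset.range (x + 1), ‖f (y + 1)‖₊) ^ (p : ℝ) * m x : ℝ≥0) : ℝ≥0∞) := by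
        refine ENNReal.tsum_le_tsum fun x => ENNReal.ofReal_le_coe.2 ?_
        rw [sum_Icc_one_eq_sum_range, hm]
        push_cast
        gcongr
        exact norm_sum_le _ _
    _ ≤ _ := hardy
    _ = _ := by
        rw [ENNReal.ofReal_mul hpq.nonneg, ← NNReal.coe_rpow]
        simp only [ENNReal.ofReal_coe_nnreal, hv, ← coe_nnnorm, ← NNReal.coe_rpow,
          ← NNReal.coe_mul, rpow_neg_one_div_sub_one_rpow_one_sub hpq.lt.ne']

/-- Discrete Muckenhoupt criterion, sufficiency (Proposition 2.1, upper bound):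
if `B¹_{μ,ν} < ∞` then the weighted Hardy inequality holds with constant
`p^p/(p-1)^{p-1} · B¹_{μ,ν}`. -/
theorem stmt_0 (p : ℝ) (hp : 1 < p) (μ ν : ℕ → ℝ)
    (hμ : ∀ n, 1 ≤ n → 0 < μ n) (hν : ∀ n, 1 ≤ n → 0 < ν n)
    (B1 : ℝ≥0∞)
    (hB1 : B1 = ⨆ r : ℕ,
      (∑' x : ℕ, ENNReal.ofReal (μ (x + (r + 1)))) *
        (∑ x ∈ Finset.Icc 1 (r + 1), ENNReal.ofReal (ν x ^ (-1 / (p - 1)))) ^ (p - 1))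
    (hB1fin : B1 ≠ ⊤)
    (f : ℕ → ℝ) (hf : (Function.support f).Finite) :
    ∑' x : ℕ, ENNReal.ofReal (|∑ y ∈ Finset.Icc 1 (x + 1), f y| ^ p * μ (x + 1)) ≤
      ENNReal.ofReal (p ^ p / (p - 1) ^ (p - 1)) * B1 *
        ∑' x : ℕ, ENNReal.ofReal (|f (x + 1)| ^ p * ν (x + 1)) :=
  stmt_0_general p hp μ ν (fun n hn => (hμ n hn).le) hν B1 hB1 hB1fin f
end

section
/- Let p > 1, let μ, ν : {1,2,...} → (0,∞) be positive weights, and suppose C > 0 is a constant such that ∑_{x=1}^∞ |∑_{y=1}^x f(y)|^p μ(x) ≤ C · ∑_{x=1}^∞ |f(x)|^p ν(x) holds for every finitely supported f : {1,2,...} → ℝ. Then for every integer r ≥ 1, (∑_{x=r}^∞ μ(x)) · (∑_{x=1}^r ν(x)^{-1/(p-1)})^{p-1} ≤ C; in particular B¹_{μ,ν} ≤ C. -/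
open scoped ENNReal

/-!
Test the Hardy inequality on `f = ν ^ (-1 / (p - 1))` cut off at `r`. This exponent makes
`f ^ p * ν = f`, so the right-hand side is `C * S` with `S = ∑_{x ≤ r} f x`. On the left the partial
sums of `f` are constantly `S` from `r` on, so the terms `x ≥ r` alone contribute
`S ^ p * ∑_{x ≥ r} μ x`. Dividing by `S` gives the Muckenhoupt bound.
-/

/-- The dual weight `ν ^ (-1 / (p - 1)) = ν ^ (1 - p')` of the weight `ν`, where `p'` is the
exponent conjugate to `p`; its truncations are the test functions for the Hardy inequality. -/
noncomputable def dualWeight {α : Type*} (p : ℝ) (ν : α → ℝ) (a : α) : ℝ :=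
  ν a ^ (-1 / (p - 1))

/-- The discrete Hardy inequality from `ℓ^p(ν)` to `ℓ^p(μ)` with constant `c`, for finitely
supported functions on the positive integers. Functions and weights are defined on `ℕ`, but their
values at `0` do not enter; `ENNReal.ofReal` sends terms with a negative weight to `0`. -/
def HardyInequality (p : ℝ) (μ ν : ℕ → ℝ) (c : ℝ≥0∞) : Prop :=
  ∀ f : ℕ → ℝ, (Function.support f).Finite →
    ∑' x : ℕ, ENNReal.ofReal (|∑ y ∈ Finset.Icc 1 (x + 1), f y| ^ p * μ (x + 1)) ≤
      c * ∑' x : ℕ, ENNReal.ofReal (|f (x + 1)| ^ p * ν (x + 1))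

section DualWeight

variable {α : Type*} {p : ℝ} {ν : α → ℝ}

lemma dualWeight_pos {a : α} (ha : 0 < ν a) : 0 < dualWeight p ν a :=
  Real.rpow_pos_of_pos ha _

lemma dualWeight_rpow_mul_self (hp : p ≠ 1) {a : α} (ha : 0 < ν a) :
    dualWeight p ν a ^ p * ν a = dualWeight p ν a := by
  have hexp : -1 / (p - 1) * p + 1 = -1 / (p - 1) := by
    field_simp [sub_ne_zero.mpr hp]
    ring
  rw [dualWeight, ← Real.rpow_mul ha.le, ← Real.rpow_add_one ha.ne', hexp]

lemma abs_indicator_dualWeight_rpow_mul (hp₀ : p ≠ 0) (hp₁ : p ≠ 1) {s : Set α}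
    (hν : ∀ b ∈ s, 0 < ν b) (a : α) :
    |s.indicator (dualWeight p ν) a| ^ p * ν a = s.indicator (dualWeight p ν) a := by
  by_cases ha : a ∈ s
  · rw [Set.indicator_of_mem ha, abs_of_pos (dualWeight_pos (hν a ha)),
      dualWeight_rpow_mul_self hp₁ (hν a ha)]
  · rw [Set.indicator_of_notMem ha, abs_zero, Real.zero_rpow hp₀, zero_mul]

end DualWeight

lemma tsum_succ_eq_sum_Icc_one {M : Type*} [AddCommMonoid M] [TopologicalSpace M] {f : ℕ → M}
    {n : ℕ} (hf : Function.support f ⊆ Finset.Icc 1 n) :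
    ∑' x, f (x + 1) = ∑ x ∈ Finset.Icc 1 n, f x := by
  have hrange : Function.support f ⊆ Set.range (· + 1) := fun x hx ↦
    ⟨x - 1, Nat.sub_add_cancel (Finset.mem_Icc.mp (hf hx)).1⟩
  rw [(add_left_injective 1).tsum_eq hrange, tsum_eq_sum' hf]

lemma sum_Icc_eq_of_forall_lt_eq_zero {α M : Type*} [LinearOrder α] [LocallyFiniteOrder α]
    [AddCommMonoid M] {f : α → M} {a m n : α} (hmn : m ≤ n) (hf : ∀ x, m < x → f x = 0) :
    ∑ x ∈ Finset.Icc a n, f x = ∑ x ∈ Finset.Icc a m, f x := by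
  refine (Finset.sum_subset (Finset.Icc_subset_Icc_right hmn) fun x hxn hxm ↦ hf x ?_).symm
  exact lt_of_not_ge fun hx ↦ hxm (Finset.mem_Icc.mpr ⟨(Finset.mem_Icc.mp hxn).1, hx⟩)

lemma tsum_tail_mul_rpow_le_tsum_abs_sum_rpow_mul {p : ℝ} (hp : 0 ≤ p) (μ : ℕ → ℝ) {f : ℕ → ℝ}
    {r : ℕ} (hf : ∀ x, r + 1 < x → f x = 0) :
    (∑' x : ℕ, ENNReal.ofReal (μ (x + (r + 1)))) *
        ENNReal.ofReal |∑ y ∈ Finset.Icc 1 (r + 1), f y| ^ p ≤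
      ∑' x : ℕ, ENNReal.ofReal (|∑ y ∈ Finset.Icc 1 (x + 1), f y| ^ p * μ (x + 1)) := by
  have hpartial (x : ℕ) : ∑ y ∈ Finset.Icc 1 (x + r + 1), f y = ∑ y ∈ Finset.Icc 1 (r + 1), f y :=
    sum_Icc_eq_of_forall_lt_eq_zero (by omega) hf
  calc (∑' x : ℕ, ENNReal.ofReal (μ (x + (r + 1)))) *
          ENNReal.ofReal |∑ y ∈ Finset.Icc 1 (r + 1), f y| ^ p
      = ∑' x : ℕ, ENNReal.ofReal
          (|∑ y ∈ Finset.Icc 1 (x + r + 1), f y| ^ p * μ (x + r + 1)) := by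
        rw [mul_comm, ← ENNReal.tsum_mul_left, ENNReal.ofReal_rpow_of_nonneg (abs_nonneg _) hp]
        simp only [hpartial, ENNReal.ofReal_mul (Real.rpow_nonneg (abs_nonneg _) p), ← add_assoc]
    _ ≤ ∑' x : ℕ, ENNReal.ofReal (|∑ y ∈ Finset.Icc 1 (x + 1), f y| ^ p * μ (x + 1)) :=
        ENNReal.tsum_comp_le_tsum_of_injective (add_left_injective r)
          fun x ↦ ENNReal.ofReal (|∑ y ∈ Finset.Icc 1 (x + 1), f y| ^ p * μ (x + 1))

lemma mul_rpow_sub_one_le_of_mul_rpow_le_mul {a c s : ℝ≥0∞} {p : ℝ} (hs₀ : s ≠ 0) (hs : s ≠ ∞)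
    (h : a * s ^ p ≤ c * s) : a * s ^ (p - 1) ≤ c := by
  rw [ENNReal.rpow_sub _ _ hs₀ hs, ENNReal.rpow_one, ← mul_div_assoc]
  exact ENNReal.div_le_of_le_mul h

theorem HardyInequality.tsum_tail_mul_sum_dualWeight_rpow_le {p : ℝ} {μ ν : ℕ → ℝ} {c : ℝ≥0∞}
    (hHardy : HardyInequality p μ ν c) (hp : 1 < p) (hν : ∀ x, 1 ≤ x → 0 < ν x) (r : ℕ) :
    (∑' x : ℕ, ENNReal.ofReal (μ (x + (r + 1)))) *
      (∑ x ∈ Finset.Icc 1 (r + 1), ENNReal.ofReal (dualWeight p ν x)) ^ (p - 1) ≤ c := by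
  set I := Finset.Icc 1 (r + 1) with hI
  have hp₀ : 0 < p := one_pos.trans hp
  have hνI : ∀ x ∈ I, 0 < ν x := fun x hx ↦ hν x (Finset.mem_Icc.mp hx).1
  have hσ : ∀ x ∈ I, 0 < dualWeight p ν x := fun x hx ↦ dualWeight_pos (hνI x hx)
  have hSpos : 0 < ∑ x ∈ I, dualWeight p ν x :=
    Finset.sum_pos hσ (Finset.nonempty_Icc.mpr (by omega))
  have hS : ∑ x ∈ I, ENNReal.ofReal (dualWeight p ν x) =
      ENNReal.ofReal (∑ x ∈ I, dualWeight p ν x) :=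
    (ENNReal.ofReal_sum_of_nonneg fun x hx ↦ (hσ x hx).le).symm
  set f : ℕ → ℝ := (I : Set ℕ).indicator (dualWeight p ν) with hf
  have hfI : ∑ x ∈ I, f x = ∑ x ∈ I, dualWeight p ν x := Finset.sum_indicator_subset _ subset_rfl
  have hfν : ∑' x : ℕ, ENNReal.ofReal (|f (x + 1)| ^ p * ν (x + 1)) =
      ENNReal.ofReal (∑ x ∈ I, dualWeight p ν x) := by
    have hsupp : Function.support (fun x ↦ ENNReal.ofReal (f x)) ⊆ I :=
      (Function.support_comp_subset ENNReal.ofReal_zero f).trans Set.support_indicator_subset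
    simp only [hf, abs_indicator_dualWeight_rpow_mul hp₀.ne' hp.ne' hνI]
    rw [tsum_succ_eq_sum_Icc_one hsupp, ← hfI, ENNReal.ofReal_sum_of_nonneg]
    exact fun x _ ↦ Set.indicator_nonneg (fun y hy ↦ (hσ y hy).le) x
  have htail := tsum_tail_mul_rpow_le_tsum_abs_sum_rpow_mul hp₀.le μ (f := f) (r := r)
    fun x hx ↦ Set.indicator_of_notMem (by simp [hI, hx]) _
  have htest := htail.trans (hHardy f (I.finite_toSet.subset Set.support_indicator_subset))
  rw [hfI, abs_of_pos hSpos, hfν] at htest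
  rw [hS]
  exact mul_rpow_sub_one_le_of_mul_rpow_le_mul (ENNReal.ofReal_pos.mpr hSpos).ne'
    ENNReal.ofReal_ne_top htest

/-- Discrete Muckenhoupt criterion, necessity (Proposition 2.1, lower bound):
if the weighted Hardy inequality holds with constant `C` for all finitely supported `f`,
then for every `r ≥ 1` the Muckenhoupt product is at most `C`; in particular
`B¹_{μ,ν} ≤ C`. -/
theorem stmt_1 (p : ℝ) (hp : 1 < p) (μ ν : ℕ → ℝ)
    (hμ : ∀ n, 1 ≤ n → 0 < μ n) (hν : ∀ n, 1 ≤ n → 0 < ν n)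
    (C : ℝ) (hC : 0 < C)
    (hHardy : ∀ f : ℕ → ℝ, (Function.support f).Finite →
      ∑' x : ℕ, ENNReal.ofReal (|∑ y ∈ Finset.Icc 1 (x + 1), f y| ^ p * μ (x + 1)) ≤
        ENNReal.ofReal C * ∑' x : ℕ, ENNReal.ofReal (|f (x + 1)| ^ p * ν (x + 1))) :
    (∀ r : ℕ,
      (∑' x : ℕ, ENNReal.ofReal (μ (x + (r + 1)))) *
        (∑ x ∈ Finset.Icc 1 (r + 1), ENNReal.ofReal (ν x ^ (-1 / (p - 1)))) ^ (p - 1) ≤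
        ENNReal.ofReal C) ∧
    (⨆ r : ℕ,
      (∑' x : ℕ, ENNReal.ofReal (μ (x + (r + 1)))) *
        (∑ x ∈ Finset.Icc 1 (r + 1), ENNReal.ofReal (ν x ^ (-1 / (p - 1)))) ^ (p - 1)) ≤
      ENNReal.ofReal C := by
  have hbound (r : ℕ) : (∑' x : ℕ, ENNReal.ofReal (μ (x + (r + 1)))) *
      (∑ x ∈ Finset.Icc 1 (r + 1), ENNReal.ofReal (ν x ^ (-1 / (p - 1)))) ^ (p - 1) ≤
        ENNReal.ofReal C :=
    HardyInequality.tsum_tail_mul_sum_dualWeight_rpow_le hHardy hp hν r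
  exact ⟨hbound, iSup_le hbound⟩
end

section
/- Let p > 1 and let α be a real number with α ≠ p - 1. Then there exists a constant A > 0 such that for every finitely supported sequence u : ℕ → ℝ with u_0 = 0, ∑_{n=1}^∞ |u_n - u_{n-1}|^p n^α ≥ A · ∑_{n=1}^∞ |u_n|^p n^{α-p}. -/
/-!
Put `b = α - p + 1`. The sequence `n ↦ n ^ b` is strictly monotone, with increments at least a
multiple `c` of `n ^ (b - 1) = n ^ (α - p)` in absolute value, so summation by parts bounds
`c * ∑ ‖u n‖ ^ p * n ^ (α - p)` by `∑ (‖u n‖ ^ p - ‖u m‖ ^ p) * n ^ b`, where the neighbour `m` is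
`n - 1` if `b < 0` and `n + 1` if `b > 0`. Bernoulli's inequality followed by Young's inequality
bounds each summand by `(p - 1) * (c / p)` times `‖u n‖ ^ p * n ^ (α - p)`, absorbed on the left,
plus a multiple of `‖u n - u m‖ ^ p * n ^ α`. This split, the optimal one, gives the constant
`(c / p) ^ p`.
-/

section Bernoulli

open Real

variable {b p x y η : ℝ}

lemma one_add_mul_self_le_rpow_one_add_of_nonpos (hb : b ≤ 0) {s : ℝ} (hs : -1 < s) :
    1 + b * s ≤ (1 + s) ^ b := by
  have hs' : 0 < 1 + s := by linarith
  have hlog : log (1 + s) ≤ s := by linarith [log_le_sub_one_of_pos hs']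
  calc 1 + b * s ≤ log (1 + s) * b + 1 := by linarith [mul_le_mul_of_nonpos_left hlog hb]
    _ ≤ exp (log (1 + s) * b) := add_one_le_exp _
    _ = (1 + s) ^ b := (rpow_def_of_pos hs' b).symm

lemma rpow_mul_one_add_sub_div_rpow (hx : 0 < x) (hy : 0 ≤ y) :
    x ^ b * (1 + (y - x) / x) ^ b = y ^ b := by
  have hquot : 1 + (y - x) / x = y / x := by field_simp; ring
  rw [hquot, div_rpow hy hx.le, mul_div_cancel₀ _ (rpow_pos_of_pos hx b).ne']

lemma rpow_mul_one_add_mul_sub_div (hx : 0 < x) :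
    x ^ b * (1 + b * ((y - x) / x)) = x ^ b + b * x ^ (b - 1) * (y - x) := by
  rw [rpow_sub_one hx.ne']
  ring

lemma rpow_sub_rpow_le_mul_sub (hp : 1 ≤ p) (hx : 0 ≤ x) (hy : 0 ≤ y) :
    x ^ p - y ^ p ≤ p * x ^ (p - 1) * (x - y) := by
  rcases hx.eq_or_lt with rfl | hx
  · rcases hp.eq_or_lt with rfl | hp
    · simp
    · rw [zero_rpow (by linarith), zero_rpow (by linarith)]
      linarith [rpow_nonneg hy p]
  · have hslope : -1 ≤ (y - x) / x := by rw [le_div_iff₀ hx]; linarith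
    have := mul_le_mul_of_nonneg_left (one_add_mul_self_le_rpow_one_add hslope hp)
      (rpow_nonneg hx.le p)
    rw [rpow_mul_one_add_mul_sub_div hx, rpow_mul_one_add_sub_div_rpow hx hy] at this
    linarith

lemma mul_sub_le_rpow_sub_rpow (hb : 0 ≤ b) (hb' : b ≤ 1) (hx : 0 < x) (hy : 0 ≤ y) :
    b * x ^ (b - 1) * (x - y) ≤ x ^ b - y ^ b := by
  have hslope : -1 ≤ (y - x) / x := by rw [le_div_iff₀ hx]; linarith
  have := mul_le_mul_of_nonneg_left (rpow_one_add_le_one_add_mul_self hslope hb hb')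
    (rpow_nonneg hx.le b)
  rw [rpow_mul_one_add_mul_sub_div hx, rpow_mul_one_add_sub_div_rpow hx hy] at this
  linarith

lemma rpow_sub_rpow_le_mul_sub_of_nonpos (hb : b ≤ 0) (hx : 0 < x) (hy : 0 < y) :
    x ^ b - y ^ b ≤ b * x ^ (b - 1) * (x - y) := by
  have hslope : -1 < (y - x) / x := by rw [lt_div_iff₀ hx]; linarith
  have := mul_le_mul_of_nonneg_left (one_add_mul_self_le_rpow_one_add_of_nonpos hb hslope)
    (rpow_nonneg hx.le b)
  rw [rpow_mul_one_add_mul_sub_div hx, rpow_mul_one_add_sub_div_rpow hx hy.le] at this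
  linarith

lemma min_mul_rpow_sub_one_le (hb : 0 ≤ b) (hx : 1 ≤ x) :
    min 1 b * x ^ (b - 1) ≤ x ^ b - (x - 1) ^ b := by
  have hx₀ : 0 < x := by linarith
  have hx₁ : 0 ≤ x - 1 := by linarith
  rcases le_total 1 b with h | h
  · have hpred : (x - 1) ^ b ≤ x ^ (b - 1) * (x - 1) := calc
      (x - 1) ^ b = (x - 1) ^ (b - 1) * (x - 1) := by
        rw [← rpow_add_one' hx₁ (by linarith), sub_add_cancel]
      _ ≤ x ^ (b - 1) * (x - 1) := by gcongr; linarith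
    have hsucc : x ^ b = x ^ (b - 1) * x := by
      rw [← rpow_add_one hx₀.ne', sub_add_cancel]
    rw [min_eq_left h]
    linarith
  · simpa [min_eq_right h] using mul_sub_le_rpow_sub_rpow hb h hx₀ hx₁

lemma neg_mul_two_mul_rpow_sub_one_le (hb : b ≤ 0) (hx : 1 ≤ x) :
    -b * (2 * x) ^ (b - 1) ≤ x ^ b - (x + 1) ^ b := by
  have hx₀ : 0 < x := by linarith
  calc -b * (2 * x) ^ (b - 1) ≤ -b * (x + 1) ^ (b - 1) :=
        mul_le_mul_of_nonneg_left
          (rpow_le_rpow_of_nonpos (by linarith) (by linarith) (by linarith)) (by linarith)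
    _ ≤ x ^ b - (x + 1) ^ b := by
      linarith [rpow_sub_rpow_le_mul_sub_of_nonpos hb (add_pos hx₀ one_pos) hx₀]

lemma mul_rpow_sub_one_mul_le_young (hp : 1 ≤ p) (hη : 0 < η) (hx : 0 ≤ x) (hy : 0 ≤ y) :
    p * x ^ (p - 1) * y ≤ (p - 1) * η * x ^ p + η ^ (1 - p) * y ^ p := by
  have htangent := rpow_sub_rpow_le_mul_sub hp hx (div_nonneg hy hη.le)
  have hx_pow : x ^ p = x ^ (p - 1) * x := by
    rw [← rpow_add_one' hx (by linarith), sub_add_cancel]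
  calc p * x ^ (p - 1) * y = η * (p * x ^ (p - 1) * (y / η)) := by field_simp
    _ ≤ η * ((p - 1) * x ^ p + (y / η) ^ p) := by
      refine mul_le_mul_of_nonneg_left ?_ hη.le
      rw [mul_sub, mul_assoc p, ← hx_pow] at htangent
      linarith
    _ = (p - 1) * η * x ^ p + η ^ (1 - p) * y ^ p := by
      rw [div_rpow hy hη.le, rpow_sub hη, rpow_one]
      ring

end Bernoulli

section Summation

open Finset

lemma sum_range_mul_sub_add_sum_range_sub_mul {R : Type*} [CommRing R] (f g : ℕ → R) (N : ℕ) :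
    ∑ n ∈ range N, f (n + 1) * (g (n + 1) - g n) + ∑ n ∈ range N, (f (n + 1) - f n) * g n =
      f N * g N - f 0 * g 0 := by
  rw [← sum_add_distrib, ← sum_range_sub fun n => f n * g n]
  exact sum_congr rfl fun n _ => by ring

variable {E : Type*} [SeminormedAddCommGroup E] {p c : ℝ}

lemma norm_rpow_sub_norm_rpow_mul_le {η r : ℝ} (hp : 1 ≤ p) (hη : 0 < η) (hr : 0 ≤ r) (x y : E) :
    (‖x‖ ^ p - ‖y‖ ^ p) * r ≤
      (p - 1) * η * ‖x‖ ^ p + η ^ (1 - p) * (‖x - y‖ * r) ^ p := calc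
  (‖x‖ ^ p - ‖y‖ ^ p) * r ≤ p * ‖x‖ ^ (p - 1) * (‖x‖ - ‖y‖) * r := by
    gcongr
    exact rpow_sub_rpow_le_mul_sub hp (norm_nonneg x) (norm_nonneg y)
  _ ≤ p * ‖x‖ ^ (p - 1) * ‖x - y‖ * r := by
    gcongr
    exact norm_sub_norm_le x y
  _ = p * ‖x‖ ^ (p - 1) * (‖x - y‖ * r) := by ring
  _ ≤ _ := mul_rpow_sub_one_mul_le_young hp hη (norm_nonneg x) (by positivity)

lemma div_rpow_mul_sum_norm_rpow_le {ι : Type*} {s : Finset ι} {x y : ι → E} {r w : ι → ℝ}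
    (hp : 1 ≤ p) (hc : 0 < c) (hr : ∀ i ∈ s, 0 ≤ r i) (hw : ∀ i ∈ s, 0 ≤ w i)
    (h : c * ∑ i ∈ s, ‖x i‖ ^ p * w i ≤ ∑ i ∈ s, (‖x i‖ ^ p - ‖y i‖ ^ p) * (w i * r i)) :
    (c / p) ^ p * ∑ i ∈ s, ‖x i‖ ^ p * w i ≤ ∑ i ∈ s, (‖x i - y i‖ * r i) ^ p * w i := by
  have hp₀ : 0 < p := by linarith
  set η := c / p with hη_def
  have hη : 0 < η := div_pos hc hp₀
  set S := ∑ i ∈ s, ‖x i‖ ^ p * w i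
  set D := ∑ i ∈ s, (‖x i - y i‖ * r i) ^ p * w i
  have hyoung : ∑ i ∈ s, (‖x i‖ ^ p - ‖y i‖ ^ p) * (w i * r i) ≤
      (p - 1) * η * S + η ^ (1 - p) * D := by
    simp only [S, D, mul_sum, ← sum_add_distrib]
    refine sum_le_sum fun i hi => ?_
    linarith [mul_le_mul_of_nonneg_right
      (norm_rpow_sub_norm_rpow_mul_le hp hη (hr i hi) (x i) (y i)) (hw i hi)]
  have habsorbed : η * S ≤ η ^ (1 - p) * D := by
    have hc_eq : c = p * η := by rw [hη_def]; field_simp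
    rw [hc_eq] at h
    linarith
  calc η ^ p * S = η ^ (p - 1) * (η * S) := by
        rw [Real.rpow_sub_one hη.ne']
        field_simp
    _ ≤ η ^ (p - 1) * (η ^ (1 - p) * D) := by gcongr
    _ = D := by
      rw [← mul_assoc, ← Real.rpow_add hη, sub_add_sub_cancel, sub_self, Real.rpow_zero, one_mul]

theorem sum_range_hardy_of_le_sub_succ {u : ℕ → E} {r w : ℕ → ℝ} (hp : 1 ≤ p) (hc : 0 < c)
    (hr : ∀ n, 0 ≤ r n) (hw : ∀ n, 0 ≤ w n)
    (h : ∀ n, c * w (n + 1) ≤ w (n + 1) * r (n + 1) - w (n + 2) * r (n + 2))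
    (hu : u 0 = 0) (N : ℕ) :
    (c / p) ^ p * ∑ n ∈ range N, ‖u (n + 1)‖ ^ p * w (n + 1) ≤
      ∑ n ∈ range N, (‖u (n + 1) - u n‖ * r (n + 1)) ^ p * w (n + 1) := by
  refine div_rpow_mul_sum_norm_rpow_le hp hc (fun n _ => hr _) (fun n _ => hw _) ?_
  have hparts := sum_range_mul_sub_add_sum_range_sub_mul (fun n => ‖u n‖ ^ p)
    (fun n => w (n + 1) * r (n + 1)) N
  have hleft : ‖u 0‖ ^ p = 0 := by rw [hu, norm_zero, Real.zero_rpow (by linarith)]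
  have hright : 0 ≤ ‖u N‖ ^ p * (w (N + 1) * r (N + 1)) :=
    mul_nonneg (by positivity) (mul_nonneg (hw _) (hr _))
  calc c * ∑ n ∈ range N, ‖u (n + 1)‖ ^ p * w (n + 1)
    _ ≤ ∑ n ∈ range N, -(‖u (n + 1)‖ ^ p *
          (w (n + 2) * r (n + 2) - w (n + 1) * r (n + 1))) := by
      rw [mul_sum]
      refine sum_le_sum fun n _ => ?_
      linarith [mul_le_mul_of_nonneg_left (h n) (Real.rpow_nonneg (norm_nonneg (u (n + 1))) p)]
    _ ≤ _ := by
      rw [sum_neg_distrib]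
      rw [hleft] at hparts
      linarith

theorem sum_range_hardy_of_le_succ_sub {u : ℕ → E} {r w : ℕ → ℝ} (hp : 1 ≤ p) (hc : 0 < c)
    (hr : ∀ n, 0 ≤ r n) (hw : ∀ n, 0 ≤ w n)
    (h : ∀ n, c * w (n + 1) ≤ w (n + 1) * r (n + 1) - w n * r n)
    {N : ℕ} (hu : u (N + 1) = 0) :
    (c / p) ^ p * ∑ n ∈ range N, ‖u (n + 1)‖ ^ p * w (n + 1) ≤
      ∑ n ∈ range N, (‖u (n + 1) - u (n + 2)‖ * r (n + 1)) ^ p * w (n + 1) := by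
  refine div_rpow_mul_sum_norm_rpow_le hp hc (fun n _ => hr _) (fun n _ => hw _) ?_
  have hparts := sum_range_mul_sub_add_sum_range_sub_mul (fun n => w n * r n)
    (fun n => ‖u (n + 1)‖ ^ p) N
  have hleft : 0 ≤ w 0 * r 0 * ‖u 1‖ ^ p := mul_nonneg (mul_nonneg (hw _) (hr _)) (by positivity)
  have hright : ‖u (N + 1)‖ ^ p = 0 := by rw [hu, norm_zero, Real.zero_rpow (by linarith)]
  calc c * ∑ n ∈ range N, ‖u (n + 1)‖ ^ p * w (n + 1)
    _ ≤ ∑ n ∈ range N, (w (n + 1) * r (n + 1) - w n * r n) * ‖u (n + 1)‖ ^ p := by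
      rw [mul_sum]
      refine sum_le_sum fun n _ => ?_
      linarith [mul_le_mul_of_nonneg_right (h n) (Real.rpow_nonneg (norm_nonneg (u (n + 1))) p)]
    _ ≤ -∑ n ∈ range N, w (n + 1) * r (n + 1) * (‖u (n + 2)‖ ^ p - ‖u (n + 1)‖ ^ p) := by
      rw [hright] at hparts
      linarith
    _ = _ := by
      rw [← sum_neg_distrib]
      exact sum_congr rfl fun n _ => by ring

end Summation

section PowerWeights

open Finset

variable {E : Type*} [SeminormedAddCommGroup E] {p α : ℝ} {u : ℕ → E}

lemma mul_rpow_mul_rpow_sub {d t : ℝ} (hd : 0 ≤ d) (ht : 0 < t) :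
    (d * t) ^ p * t ^ (α - p) = d ^ p * t ^ α := by
  rw [Real.mul_rpow hd ht.le, mul_assoc, ← Real.rpow_add ht, add_sub_cancel]

theorem sum_range_hardy_of_lt (hp : 1 ≤ p) (hα : α < p - 1) (hu : u 0 = 0) (N : ℕ) :
    ((p - 1 - α) * 2 ^ (α - p) / p) ^ p *
        ∑ n ∈ range N, ‖u (n + 1)‖ ^ p * ((n : ℝ) + 1) ^ (α - p) ≤
      ∑ n ∈ range N, ‖u (n + 1) - u n‖ ^ p * ((n : ℝ) + 1) ^ α := by
  have hflux (n : ℕ) : (p - 1 - α) * 2 ^ (α - p) * ((n + 1 : ℕ) : ℝ) ^ (α - p) ≤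
      ((n + 1 : ℕ) : ℝ) ^ (α - p) * ((n + 1 : ℕ) : ℝ) -
        ((n + 2 : ℕ) : ℝ) ^ (α - p) * ((n + 2 : ℕ) : ℝ) := by
    have := neg_mul_two_mul_rpow_sub_one_le (b := α - p + 1) (x := n + 1) (by linarith) (by simp)
    rw [add_sub_cancel_right, Real.mul_rpow (by norm_num) (by positivity), add_assoc,
      one_add_one_eq_two, Real.rpow_add_one' (by positivity) (by linarith),
      Real.rpow_add_one' (by positivity) (by linarith)] at this
    push_cast
    linarith
  have h := sum_range_hardy_of_le_sub_succ (w := fun n => (n : ℝ) ^ (α - p)) hp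
    (mul_pos (by linarith) (by positivity)) (fun n : ℕ => n.cast_nonneg) (fun n => by positivity)
    hflux hu N
  push_cast at h
  refine h.trans_eq (sum_congr rfl fun n _ => ?_)
  exact mul_rpow_mul_rpow_sub (norm_nonneg _) n.cast_add_one_pos

theorem sum_range_hardy_of_gt (hp : 1 ≤ p) (hα : p - 1 < α) {N : ℕ} (hu : u N = 0) :
    (min 1 (α - p + 1) / p) ^ p *
        ∑ n ∈ range N, ‖u (n + 1)‖ ^ p * ((n : ℝ) + 1) ^ (α - p) ≤
      ∑ n ∈ range N, ‖u (n + 1) - u n‖ ^ p * ((n : ℝ) + 1) ^ α := by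
  have hα₀ : 0 ≤ α := by linarith
  have hb : 0 < α - p + 1 := by linarith
  have hflux (n : ℕ) : min 1 (α - p + 1) * ((n + 1 : ℕ) : ℝ) ^ (α - p) ≤
      ((n + 1 : ℕ) : ℝ) ^ (α - p) * ((n + 1 : ℕ) : ℝ) - (n : ℝ) ^ (α - p) * (n : ℝ) := by
    have := min_mul_rpow_sub_one_le (b := α - p + 1) (x := n + 1) hb.le (by simp)
    rw [add_sub_cancel_right, add_sub_cancel_right,
      Real.rpow_add_one' (by positivity) hb.ne', Real.rpow_add_one' n.cast_nonneg hb.ne'] at this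
    exact_mod_cast this
  rcases N with _ | N
  · simp
  have h := sum_range_hardy_of_le_succ_sub (w := fun n => (n : ℝ) ^ (α - p)) hp
    (lt_min one_pos hb) (fun n : ℕ => n.cast_nonneg) (fun n => by positivity) hflux hu
  push_cast at h
  have hlast : ‖u (N + 1)‖ ^ p * ((N : ℝ) + 1) ^ (α - p) = 0 := by
    rw [hu, norm_zero, Real.zero_rpow (by linarith), zero_mul]
  rw [sum_range_succ, hlast, add_zero]
  calc _ ≤ ∑ n ∈ range N, (‖u (n + 1) - u (n + 2)‖ * ((n : ℝ) + 1)) ^ p *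
          ((n : ℝ) + 1) ^ (α - p) := h
    _ ≤ ∑ n ∈ range N, ‖u (n + 2) - u (n + 1)‖ ^ p * (((n + 1 : ℕ) : ℝ) + 1) ^ α := by
      refine sum_le_sum fun n _ => ?_
      rw [mul_rpow_mul_rpow_sub (norm_nonneg _) n.cast_add_one_pos, norm_sub_rev]
      gcongr
      simp
    _ ≤ _ := by
      rw [sum_range_succ' _ N]
      exact le_add_of_nonneg_right (by positivity)

theorem exists_sum_range_hardy_const (hp : 1 ≤ p) (hα : α ≠ p - 1) :
    ∃ A : ℝ, 0 < A ∧ ∀ (u : ℕ → E) (N : ℕ), u 0 = 0 → u N = 0 →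
      A * ∑ n ∈ range N, ‖u (n + 1)‖ ^ p * ((n : ℝ) + 1) ^ (α - p) ≤
        ∑ n ∈ range N, ‖u (n + 1) - u n‖ ^ p * ((n : ℝ) + 1) ^ α := by
  have hp₀ : 0 < p := by linarith
  rcases hα.lt_or_gt with hα | hα
  · have hgap : 0 < p - 1 - α := by linarith
    exact ⟨_, Real.rpow_pos_of_pos (div_pos (mul_pos hgap (by positivity)) hp₀) p,
      fun u N hu _ => sum_range_hardy_of_lt hp hα hu N⟩
  · have hmin : 0 < min 1 (α - p + 1) := lt_min one_pos (by linarith)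
    exact ⟨_, Real.rpow_pos_of_pos (div_pos hmin hp₀) p,
      fun u N _ hu => sum_range_hardy_of_gt hp hα hu⟩

end PowerWeights

theorem stmt_3_general {E : Type*} [SeminormedAddCommGroup E] (p α : ℝ) (hp : 1 ≤ p)
    (hα : α ≠ p - 1) :
    ∃ A : ℝ, 0 < A ∧ ∀ u : ℕ → E, (Function.support u).Finite → u 0 = 0 →
      ∑' n : ℕ, ‖u (n + 1) - u n‖ ^ p * ((n : ℝ) + 1) ^ α ≥
        A * ∑' n : ℕ, ‖u (n + 1)‖ ^ p * ((n : ℝ) + 1) ^ (α - p) := by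
  obtain ⟨A, hA, hardy⟩ := exists_sum_range_hardy_const (E := E) hp hα
  refine ⟨A, hA, fun u hu hu₀ => ?_⟩
  obtain ⟨N, hN⟩ := hu.bddAbove
  have hzero {n : ℕ} (hn : N < n) : u n = 0 := by_contra fun h => hn.not_ge (hN h)
  have hp₀ : p ≠ 0 := by linarith
  rw [tsum_eq_sum (s := Finset.range (N + 1)), tsum_eq_sum (s := Finset.range (N + 1))]
  · exact hardy u (N + 1) hu₀ (hzero N.lt_succ_self)
  all_goals
    intro n hn
    have hn : N < n := by simpa using hn
    simp [hzero hn, hzero (hn.trans n.lt_succ_self), hp₀]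

/-- Corollary 2.4 (non-critical case): for `p > 1` and `α ≠ p - 1` there is a constant
`A > 0` such that the discrete weighted `p`-Hardy inequality with weights `n^α` holds. -/
theorem stmt_3 (p α : ℝ) (hp : 1 < p) (hα : α ≠ p - 1) :
    ∃ A : ℝ, 0 < A ∧ ∀ u : ℕ → ℝ, (Function.support u).Finite → u 0 = 0 →
      ∑' n : ℕ, |u (n + 1) - u n| ^ p * ((n : ℝ) + 1) ^ α ≥
        A * ∑' n : ℕ, |u (n + 1)| ^ p * ((n : ℝ) + 1) ^ (α - p) :=
  stmt_3_general p α hp.le hα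
end

section
/- Let p > 1. There exists a constant A > 0 such that for every finitely supported sequence u : ℕ → ℝ with u_0 = 0, ∑_{n=1}^∞ |u_n - u_{n-1}|^p n^{p-1} ≥ A · ( |u_1|^p + ∑_{n=2}^∞ |u_n|^p / (n (log n)^p) ). -/
/-!
For an increasing sequence `ℓ` of times, the discrete Hardy inequality
`∑ Δℓₙ (‖uₙ₊₁‖ / ℓₙ₊₁) ^ p ≤ (p / (p - 1)) ^ p ∑ Δℓₙ (‖Δuₙ‖ / Δℓₙ) ^ p` is obtained by telescoping
`ℓₙ (‖uₙ‖ / ℓₙ) ^ p`. Each time step is cut in the proportion `(p - 1) : 1`: on the first part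
the sequence moves, at a cost given by the joint convexity of `(x, s) ↦ s (x / s) ^ p`; on the
second part it rests, and the decay of `s ↦ s (x / s) ^ p` produces the Hardy term. In the critical
case the times are the harmonic numbers, for which `Δℓₙ = 1 / (n + 1)` turns the right-hand side
into `∑ ‖Δuₙ‖ ^ p (n + 1) ^ (p - 1)`, while `ℓₙ` is comparable to `log n`.
-/

namespace Leray

variable {p : ℝ}

section Perspective

variable {s t x y : ℝ}

-- The perspective `s * (x / s) ^ p` is `∞` at `s = 0 < x`, whereas `x / 0 = 0` makes it `0` here;
-- hence `hsx`.
lemma add_mul_div_rpow_le (hp : 1 ≤ p) (hs : 0 ≤ s) (ht : 0 < t) (hx : 0 ≤ x) (hy : 0 ≤ y)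
    (hsx : s = 0 → x = 0) :
    (s + t) * ((x + y) / (s + t)) ^ p ≤ s * (x / s) ^ p + t * (y / t) ^ p := by
  have hst : 0 < s + t := by linarith
  have hmean : s / (s + t) * (x / s) + t / (s + t) * (y / t) = (x + y) / (s + t) := by
    rw [div_mul_eq_mul_div, div_mul_eq_mul_div, mul_div_cancel_of_imp' hsx,
      mul_div_cancel₀ _ ht.ne', ← add_div]
  have hconv := (convexOn_rpow hp).2 (Set.mem_Ici.2 (div_nonneg hx hs))
    (Set.mem_Ici.2 (div_nonneg hy ht.le)) (div_nonneg hs hst.le) (div_nonneg ht.le hst.le)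
    (by rw [← add_div, div_self hst.ne'])
  simp only [smul_eq_mul, hmean] at hconv
  calc (s + t) * ((x + y) / (s + t)) ^ p
      ≤ (s + t) * (s / (s + t) * (x / s) ^ p + t / (s + t) * (y / t) ^ p) := by gcongr
    _ = s * (x / s) ^ p + t * (y / t) ^ p := by field_simp

lemma mul_div_rpow_add_le (hp : 1 ≤ p) (hs : 0 < s) (ht : 0 < t) (hx : 0 ≤ x) :
    t * (x / t) ^ p + (p - 1) * (t - s) * (x / t) ^ p ≤ s * (x / s) ^ p := by
  have bernoulli : 1 + p * (t / s - 1) ≤ (t / s) ^ p := by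
    simpa using one_add_mul_self_le_rpow_one_add (s := t / s - 1)
      (by linarith [div_pos ht hs]) hp
  calc t * (x / t) ^ p + (p - 1) * (t - s) * (x / t) ^ p
      = s * ((1 + p * (t / s - 1)) * (x / t) ^ p) := by field_simp; ring
    _ ≤ s * ((t / s) ^ p * (x / t) ^ p) := by gcongr
    _ = s * (x / s) ^ p := by
      rw [← Real.mul_rpow (by positivity) (by positivity), mul_comm (t / s),
        div_mul_div_cancel₀ ht.ne']

end Perspective

variable {E : Type*} [SeminormedAddCommGroup E]

lemma hardy_step (hp : 1 < p) {s t : ℝ} (hs : 0 ≤ s) (hst : s < t) {x y : E}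
    (hsx : s = 0 → ‖x‖ = 0) :
    p / (p - 1) * (t * (‖y‖ / t) ^ p) + (t - s) * (‖y‖ / t) ^ p ≤
      p / (p - 1) * (s * (‖x‖ / s) ^ p) +
        (p / (p - 1)) ^ p * ((t - s) * (‖y - x‖ / (t - s)) ^ p) := by
  have hp' : 0 < p - 1 := by linarith
  set q := p / (p - 1) with hq
  have hq0 : 0 < q := by positivity
  have hd : 0 < t - s := by linarith
  set δ := (t - s) / q with hδ
  have hδ0 : 0 < δ := by positivity
  have hrest : (p - 1) * (t - (s + δ)) = δ := by rw [hδ, hq]; field_simp; ring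
  have decay := mul_div_rpow_add_le hp.le (by linarith : 0 < s + δ) (by linarith : 0 < t)
    (norm_nonneg y)
  rw [hrest] at decay
  have move : (s + δ) * (‖y‖ / (s + δ)) ^ p ≤ s * (‖x‖ / s) ^ p + δ * (‖y - x‖ / δ) ^ p :=
    calc (s + δ) * (‖y‖ / (s + δ)) ^ p
        ≤ (s + δ) * ((‖x‖ + ‖y - x‖) / (s + δ)) ^ p := by
          gcongr
          exact norm_le_norm_add_norm_sub' y x
      _ ≤ _ := add_mul_div_rpow_le hp.le hs hδ0 (norm_nonneg x) (norm_nonneg _) hsx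
  have cost : ‖y - x‖ / δ = q * (‖y - x‖ / (t - s)) := by rw [hδ]; field_simp
  have hqδ : q * δ = t - s := mul_div_cancel₀ _ hq0.ne'
  calc q * (t * (‖y‖ / t) ^ p) + (t - s) * (‖y‖ / t) ^ p
      = q * (t * (‖y‖ / t) ^ p + δ * (‖y‖ / t) ^ p) := by rw [← hqδ]; ring
    _ ≤ q * (s * (‖x‖ / s) ^ p + δ * (‖y - x‖ / δ) ^ p) :=
      mul_le_mul_of_nonneg_left (decay.trans move) hq0.le
    _ = q * (s * (‖x‖ / s) ^ p) + q ^ p * ((t - s) * (‖y - x‖ / (t - s)) ^ p) := by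
      rw [cost, Real.mul_rpow hq0.le (by positivity), ← hqδ]; ring

theorem discrete_hardy_inequality (hp : 1 < p) {ℓ : ℕ → ℝ} (hℓ : StrictMono ℓ) (hℓ0 : 0 ≤ ℓ 0)
    {u : ℕ → E} (hu : u 0 = 0) (N : ℕ) :
    ∑ n ∈ Finset.range N, (ℓ (n + 1) - ℓ n) * (‖u (n + 1)‖ / ℓ (n + 1)) ^ p ≤
      (p / (p - 1)) ^ p *
        ∑ n ∈ Finset.range N,
          (ℓ (n + 1) - ℓ n) * (‖u (n + 1) - u n‖ / (ℓ (n + 1) - ℓ n)) ^ p := by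
  have := sub_pos.2 hp
  have nonneg (n : ℕ) : 0 ≤ ℓ n := hℓ0.trans (hℓ.monotone n.zero_le)
  have vanish {n : ℕ} (hn : ℓ n = 0) : ‖u n‖ = 0 := by
    have : n = 0 := by
      by_contra h
      linarith [hℓ (Nat.pos_of_ne_zero h)]
    rw [this, hu, norm_zero]
  let Φ : ℕ → ℝ := fun n ↦ p / (p - 1) * (ℓ n * (‖u n‖ / ℓ n) ^ p)
  have start : Φ 0 = 0 := by simp [Φ, hu, Real.zero_rpow (by linarith : p ≠ 0)]
  have finish : 0 ≤ Φ N := by have := nonneg N; positivity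
  have step (n : ℕ) : (ℓ (n + 1) - ℓ n) * (‖u (n + 1)‖ / ℓ (n + 1)) ^ p ≤
      (p / (p - 1)) ^ p * ((ℓ (n + 1) - ℓ n) * (‖u (n + 1) - u n‖ / (ℓ (n + 1) - ℓ n)) ^ p) +
        (Φ n - Φ (n + 1)) := by
    linarith [hardy_step hp (nonneg n) (hℓ n.lt_succ_self) (y := u (n + 1)) vanish]
  have telescoped := Finset.sum_le_sum fun n (_ : n ∈ Finset.range N) ↦ step n
  rw [Finset.sum_add_distrib, ← Finset.mul_sum, Finset.sum_range_sub'] at telescoped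
  linarith

lemma harmonic_succ_sub (n : ℕ) : (harmonic (n + 1) : ℝ) - harmonic n = ((n : ℝ) + 1)⁻¹ := by
  rw [harmonic_succ]; push_cast; ring

lemma strictMono_harmonic : StrictMono fun n ↦ (harmonic n : ℝ) :=
  strictMono_nat_of_lt_succ fun n ↦ by
    rw [← sub_pos, harmonic_succ_sub]; positivity

lemma harmonic_le_three_mul_log {n : ℕ} (hn : 2 ≤ n) : (harmonic n : ℝ) ≤ 3 * Real.log n := by
  have hlog : Real.log 2 ≤ Real.log n := Real.log_le_log two_pos (mod_cast hn)
  linarith [harmonic_le_one_add_log n, Real.log_two_gt_d9]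

lemma inv_mul_div_inv_rpow {a d : ℝ} (ha : 0 < a) (hd : 0 ≤ d) :
    a⁻¹ * (d / a⁻¹) ^ p = d ^ p * a ^ (p - 1) := by
  rw [div_inv_eq_mul, Real.mul_rpow hd ha.le, Real.rpow_sub_one ha.ne']
  field_simp

theorem harmonic_hardy_inequality (hp : 1 < p) {u : ℕ → E} (hu : u 0 = 0) (N : ℕ) :
    ∑ n ∈ Finset.range N, ((n : ℝ) + 1)⁻¹ * (‖u (n + 1)‖ / harmonic (n + 1)) ^ p ≤
      (p / (p - 1)) ^ p *
        ∑ n ∈ Finset.range N, ‖u (n + 1) - u n‖ ^ p * ((n : ℝ) + 1) ^ (p - 1) := by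
  have hardy := discrete_hardy_inequality hp strictMono_harmonic (by simp) hu N
  have weight (n : ℕ) : ((n : ℝ) + 1)⁻¹ * (‖u (n + 1) - u n‖ / ((n : ℝ) + 1)⁻¹) ^ p =
      ‖u (n + 1) - u n‖ ^ p * ((n : ℝ) + 1) ^ (p - 1) :=
    inv_mul_div_inv_rpow n.cast_add_one_pos (norm_nonneg _)
  simpa only [harmonic_succ_sub, weight] using hardy

lemma rpow_div_mul_log_rpow_le (hp : 0 ≤ p) {x : ℝ} (hx : 0 ≤ x) {n : ℕ} (hn : 2 ≤ n) :
    x ^ p / (n * Real.log n ^ p) ≤ 3 ^ p * ((n : ℝ)⁻¹ * (x / harmonic n) ^ p) := by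
  have hn1 : (1 : ℝ) < n := mod_cast hn
  have hlog : 0 < Real.log n := Real.log_pos hn1
  have hharmonic : (0 : ℝ) < harmonic n := mod_cast harmonic_pos (by lia)
  calc x ^ p / (n * Real.log n ^ p)
      = (n : ℝ)⁻¹ * (x / Real.log n) ^ p := by
        rw [Real.div_rpow hx hlog.le]; field_simp
    _ ≤ (n : ℝ)⁻¹ * (3 * (x / harmonic n)) ^ p := by
        gcongr
        rw [← mul_div_assoc, div_le_div_iff₀ hlog hharmonic]
        rw [mul_comm 3 x, mul_assoc]
        gcongr
        exact harmonic_le_three_mul_log hn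
    _ = 3 ^ p * ((n : ℝ)⁻¹ * (x / harmonic n) ^ p) := by
        rw [Real.mul_rpow (by norm_num) (by positivity)]; ring

theorem leray_inequality_sum_range (hp : 1 < p) {u : ℕ → E} (hu : u 0 = 0) (N : ℕ) :
    ‖u 1‖ ^ p + ∑ n ∈ Finset.range N,
        ‖u (n + 2)‖ ^ p / (((n : ℝ) + 2) * Real.log ((n : ℝ) + 2) ^ p) ≤
      (3 * (p / (p - 1))) ^ p *
        ∑ n ∈ Finset.range (N + 1), ‖u (n + 1) - u n‖ ^ p * ((n : ℝ) + 1) ^ (p - 1) := by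
  have := sub_pos.2 hp
  set G : ℕ → ℝ := fun n ↦ ((n : ℝ) + 1)⁻¹ * (‖u (n + 1)‖ / harmonic (n + 1)) ^ p with hG
  have head : ‖u 1‖ ^ p ≤ 3 ^ p * G 0 := by
    have : (1 : ℝ) ≤ 3 ^ p := Real.one_le_rpow (by norm_num) (by linarith)
    simpa [hG] using le_mul_of_one_le_left (by positivity) this
  have tail (n : ℕ) : ‖u (n + 2)‖ ^ p / (((n : ℝ) + 2) * Real.log ((n : ℝ) + 2) ^ p) ≤
      3 ^ p * G (n + 1) := by
    have := rpow_div_mul_log_rpow_le (by linarith : 0 ≤ p) (norm_nonneg (u (n + 2)))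
      (by lia : 2 ≤ n + 2)
    simpa [hG, add_assoc, one_add_one_eq_two] using this
  calc _ ≤ 3 ^ p * G 0 + ∑ n ∈ Finset.range N, 3 ^ p * G (n + 1) :=
        add_le_add head (Finset.sum_le_sum fun n _ ↦ tail n)
    _ = 3 ^ p * ∑ n ∈ Finset.range (N + 1), G n := by
        rw [Finset.sum_range_succ', ← Finset.mul_sum]; ring
    _ ≤ 3 ^ p * ((p / (p - 1)) ^ p * _) := by gcongr; exact harmonic_hardy_inequality hp hu (N + 1)
    _ = _ := by rw [Real.mul_rpow (by norm_num) (by positivity), mul_assoc]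

lemma summable_norm_sub_rpow_mul (hp : p ≠ 0) {u : ℕ → E} (hu : (Function.support u).Finite)
    (w : ℕ → ℝ) : Summable fun n ↦ ‖u (n + 1) - u n‖ ^ p * w n := by
  have hdiff : (Function.support fun n ↦ u (n + 1) - u n).Finite :=
    ((hu.preimage (add_left_injective 1).injOn).union hu).subset (Function.support_sub _ _)
  refine summable_of_hasFiniteSupport (hdiff.subset fun n hn hzero ↦ hn ?_)
  simp [hzero, Real.zero_rpow hp]

end Leray

theorem stmt_4_general {p : ℝ} (hp : 1 < p) {E : Type*} [SeminormedAddCommGroup E] {u : ℕ → E}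
    (hu : u 0 = 0)
    (hsum : Summable fun n : ℕ ↦ ‖u (n + 1) - u n‖ ^ p * ((n : ℝ) + 1) ^ (p - 1)) :
    (Summable fun n : ℕ ↦ ‖u (n + 2)‖ ^ p / (((n : ℝ) + 2) * Real.log ((n : ℝ) + 2) ^ p)) ∧
      ‖u 1‖ ^ p + ∑' n : ℕ, ‖u (n + 2)‖ ^ p / (((n : ℝ) + 2) * Real.log ((n : ℝ) + 2) ^ p) ≤
        (3 * (p / (p - 1))) ^ p *
          ∑' n : ℕ, ‖u (n + 1) - u n‖ ^ p * ((n : ℝ) + 1) ^ (p - 1) := by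
  have := sub_pos.2 hp
  have term_nonneg (n : ℕ) :
      0 ≤ ‖u (n + 2)‖ ^ p / (((n : ℝ) + 2) * Real.log ((n : ℝ) + 2) ^ p) := by
    have : 0 ≤ Real.log ((n : ℝ) + 2) := Real.log_nonneg (by linarith [n.cast_nonneg (α := ℝ)])
    positivity
  have partial_le (N : ℕ) := le_sub_iff_add_le'.2 <|
    calc ‖u 1‖ ^ p + ∑ n ∈ Finset.range N,
          ‖u (n + 2)‖ ^ p / (((n : ℝ) + 2) * Real.log ((n : ℝ) + 2) ^ p)
        ≤ _ := Leray.leray_inequality_sum_range hp hu N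
      _ ≤ (3 * (p / (p - 1))) ^ p *
            ∑' n : ℕ, ‖u (n + 1) - u n‖ ^ p * ((n : ℝ) + 1) ^ (p - 1) := by
          gcongr
          exact hsum.sum_le_tsum _ fun n _ ↦ by positivity
  exact ⟨summable_of_sum_range_le term_nonneg partial_le,
    le_sub_iff_add_le'.1 (Real.tsum_le_of_sum_range_le term_nonneg partial_le)⟩

/-- Corollary 2.4 (critical case `α = p - 1`): a discrete Leray-type inequality with
weight `𝟙_{1}(n) + n⁻¹ log⁻ᵖ(n) 𝟙_{[2,∞)}(n)` holds for some constant `A > 0`. -/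
theorem stmt_4 (p : ℝ) (hp : 1 < p) :
    ∃ A : ℝ, 0 < A ∧ ∀ u : ℕ → ℝ, (Function.support u).Finite → u 0 = 0 →
      ∑' n : ℕ, |u (n + 1) - u n| ^ p * ((n : ℝ) + 1) ^ (p - 1) ≥
        A * (|u 1| ^ p +
          ∑' n : ℕ, |u (n + 2)| ^ p / (((n : ℝ) + 2) * Real.log ((n : ℝ) + 2) ^ p)) := by
  have := sub_pos.2 hp
  have hC : 0 < (3 * (p / (p - 1))) ^ p := by positivity
  refine ⟨((3 * (p / (p - 1))) ^ p)⁻¹, inv_pos.2 hC, fun u hfin hu ↦ (inv_mul_le_iff₀ hC).2 ?_⟩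
  exact (stmt_4_general hp hu (Leray.summable_norm_sub_rpow_mul (by linarith) hfin _)).2
end

section
/- Let p > 1. There is no constant A > 0 such that the inequality ∑_{n=1}^∞ |u_n - u_{n-1}|^p n^{p-1} ≥ A · ∑_{n=1}^∞ |u_n|^p / n holds for every finitely supported sequence u : ℕ → ℝ with u_0 = 0. -/
/-! Test the inequality on sequences that jump to `1` at index `1`, stay there up to index `M`,
and then descend to `0` at index `N`, the decrement into index `n` being proportional to `1 / n`.
The left-hand side is then exactly `1 + L ^ (1 - p)` with `L = ∑_{M < n ≤ N} 1 / n`, while the sum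
on the right is at least `∑_{n ≤ M} 1 / n`. Since the harmonic series diverges, `N` can be chosen
with `L ^ (1 - p) ≤ 1` (`L ≥ 1` when `p ≥ 1`, and `N = M + 1` when `p ≤ 1`), so `A` times every
harmonic number would be at most `2`. -/

open Filter Finset

section PlateauCutoff

/-- The test sequence for the weight `w`: it vanishes at `0`, equals `1` on the plateau `1, …, M`,
and then decreases to `0` at `N`, its decrement from `n` to `n + 1` being proportional to `w n`.
Sums over `Ico n N` are empty for `N ≤ n`, so the formula also gives `0` beyond `N`. -/
noncomputable def plateauCutoff (w : ℕ → ℝ) (M N n : ℕ) : ℝ :=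
  if n = 0 then 0 else min 1 ((∑ i ∈ Ico n N, w i) / ∑ i ∈ Ico M N, w i)

variable {w : ℕ → ℝ} {M N n : ℕ} {p : ℝ}

lemma plateauCutoff_zero (w : ℕ → ℝ) (M N : ℕ) : plateauCutoff w M N 0 = 0 := if_pos rfl

lemma plateauCutoff_eq_zero_of_le (hn : N ≤ n) : plateauCutoff w M N n = 0 := by
  simp [plateauCutoff, Ico_eq_empty_of_le hn]

lemma plateauCutoff_eq_one (hw : ∀ n, 0 < w n) (hMN : M < N) (hn : n ≠ 0) (hnM : n ≤ M) :
    plateauCutoff w M N n = 1 := by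
  have hL : 0 < ∑ i ∈ Ico M N, w i := sum_pos (fun i _ ↦ hw i) (nonempty_Ico.2 hMN)
  have hsum : ∑ i ∈ Ico M N, w i ≤ ∑ i ∈ Ico n N, w i :=
    sum_le_sum_of_subset_of_nonneg (Ico_subset_Ico_left hnM) fun i _ _ ↦ (hw i).le
  rw [plateauCutoff, if_neg hn, min_eq_left ((one_le_div hL).2 hsum)]

lemma plateauCutoff_eq_div (hw : ∀ n, 0 ≤ w n) (hn : n ≠ 0) (hMn : M ≤ n) :
    plateauCutoff w M N n = (∑ i ∈ Ico n N, w i) / ∑ i ∈ Ico M N, w i := by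
  have hsum : ∑ i ∈ Ico n N, w i ≤ ∑ i ∈ Ico M N, w i :=
    sum_le_sum_of_subset_of_nonneg (Ico_subset_Ico_left hMn) fun i _ _ ↦ hw i
  rw [plateauCutoff, if_neg hn,
    min_eq_right (div_le_one_of_le₀ hsum (sum_nonneg fun i _ ↦ hw i))]

lemma plateauCutoff_sub_succ (hw : ∀ n, 0 ≤ w n) (hn : n ≠ 0) (hMn : M ≤ n) (hnN : n < N) :
    plateauCutoff w M N n - plateauCutoff w M N (n + 1) = w n / ∑ i ∈ Ico M N, w i := by
  rw [plateauCutoff_eq_div hw hn hMn, plateauCutoff_eq_div hw n.succ_ne_zero (by lia),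
    sum_eq_sum_Ico_succ_bot hnN, ← sub_div, add_sub_cancel_right]

lemma plateauCutoff_succ_eq_self (hw : ∀ n, 0 < w n) (hMN : M < N) (hn : n ≠ 0)
    (h : n ∉ Ico M N) : plateauCutoff w M N (n + 1) = plateauCutoff w M N n := by
  rcases lt_or_ge n M with hnM | hMn
  · rw [plateauCutoff_eq_one hw hMN n.succ_ne_zero hnM, plateauCutoff_eq_one hw hMN hn hnM.le]
  · have hNn : N ≤ n := by simpa [hMn] using h
    rw [plateauCutoff_eq_zero_of_le (by lia), plateauCutoff_eq_zero_of_le hNn]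

lemma finite_support_plateauCutoff (w : ℕ → ℝ) (M N : ℕ) :
    (Function.support (plateauCutoff w M N)).Finite :=
  (Set.finite_Iio N).subset fun _ hn ↦
    lt_of_not_ge fun hNn ↦ hn (plateauCutoff_eq_zero_of_le hNn)

lemma tsum_abs_plateauCutoff_sub_rpow_mul (hp : p ≠ 0) (hw : ∀ n, 0 < w n) (hM : M ≠ 0)
    (hMN : M < N) :
    ∑' n, |plateauCutoff w M N (n + 1) - plateauCutoff w M N n| ^ p * w n ^ (1 - p) =
      w 0 ^ (1 - p) + (∑ i ∈ Ico M N, w i) ^ (1 - p) := by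
  set L := ∑ i ∈ Ico M N, w i with hL
  have hL_pos : 0 < L := sum_pos (fun i _ ↦ hw i) (nonempty_Ico.2 hMN)
  have h_descent : ∀ n ∈ Ico M N,
      |plateauCutoff w M N (n + 1) - plateauCutoff w M N n| ^ p * w n ^ (1 - p) =
        w n * (L ^ p)⁻¹ := by
    intro n hn
    obtain ⟨hMn, hnN⟩ := mem_Ico.1 hn
    rw [abs_sub_comm, plateauCutoff_sub_succ (fun i ↦ (hw i).le) (by lia) hMn hnN,
      abs_of_pos (div_pos (hw n) hL_pos), Real.div_rpow (hw n).le hL_pos.le, div_mul_eq_mul_div,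
      ← Real.rpow_add (hw n), add_sub_cancel, Real.rpow_one, div_eq_mul_inv]
  rw [tsum_eq_sum (s := insert 0 (Ico M N)), sum_insert (by simp [hM]), sum_congr rfl h_descent,
    ← sum_mul, ← hL, Real.rpow_sub hL_pos, Real.rpow_one, div_eq_mul_inv,
    plateauCutoff_eq_one hw hMN (Nat.succ_ne_zero 0) (Nat.one_le_iff_ne_zero.2 hM),
    plateauCutoff_zero, sub_zero, abs_one, Real.one_rpow, one_mul]
  intro n hn
  obtain ⟨hn0, hnI⟩ := not_or.1 (mem_insert.not.1 hn)
  rw [plateauCutoff_succ_eq_self hw hMN hn0 hnI, sub_self, abs_zero, Real.zero_rpow hp, zero_mul]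

lemma sum_range_le_tsum_abs_plateauCutoff_rpow_mul (hp : p ≠ 0) (hw : ∀ n, 0 < w n)
    (hMN : M < N) :
    ∑ n ∈ range M, w n ≤ ∑' n, |plateauCutoff w M N (n + 1)| ^ p * w n := by
  have h_summable : Summable fun n ↦ |plateauCutoff w M N (n + 1)| ^ p * w n := by
    refine summable_of_ne_finset_zero (s := range N) fun n hn ↦ ?_
    have hNn : N ≤ n := by simpa using hn
    rw [plateauCutoff_eq_zero_of_le (by lia), abs_zero, Real.zero_rpow hp, zero_mul]
  calc ∑ n ∈ range M, w n
      = ∑ n ∈ range M, |plateauCutoff w M N (n + 1)| ^ p * w n := by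
        refine sum_congr rfl fun n hn ↦ ?_
        rw [plateauCutoff_eq_one hw hMN n.succ_ne_zero (mem_range.1 hn), abs_one, Real.one_rpow,
          one_mul]
    _ ≤ _ := h_summable.sum_le_tsum _ fun n _ ↦
        mul_nonneg (Real.rpow_nonneg (abs_nonneg _) p) (hw n).le

end PlateauCutoff

lemma mul_sum_range_le_of_weighted_hardy {w : ℕ → ℝ} {p A : ℝ} (hp : p ≠ 0) (hw : ∀ n, 0 < w n)
    (hA : 0 ≤ A)
    (hardy : ∀ u : ℕ → ℝ, (Function.support u).Finite → u 0 = 0 →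
      A * ∑' n, |u (n + 1)| ^ p * w n ≤ ∑' n, |u (n + 1) - u n| ^ p * w n ^ (1 - p))
    {M N : ℕ} (hM : M ≠ 0) (hMN : M < N) :
    A * ∑ n ∈ range M, w n ≤ w 0 ^ (1 - p) + (∑ n ∈ Ico M N, w n) ^ (1 - p) :=
  calc A * ∑ n ∈ range M, w n
      ≤ A * ∑' n, |plateauCutoff w M N (n + 1)| ^ p * w n :=
        mul_le_mul_of_nonneg_left (sum_range_le_tsum_abs_plateauCutoff_rpow_mul hp hw hMN) hA
    _ ≤ ∑' n, |plateauCutoff w M N (n + 1) - plateauCutoff w M N n| ^ p * w n ^ (1 - p) :=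
        hardy _ (finite_support_plateauCutoff w M N) (plateauCutoff_zero w M N)
    _ = _ := tsum_abs_plateauCutoff_sub_rpow_mul hp hw hM hMN

lemma exists_lt_le_sum_Ico_of_tendsto_atTop {w : ℕ → ℝ}
    (hw : Tendsto (fun n ↦ ∑ i ∈ range n, w i) atTop atTop) (C : ℝ) (M : ℕ) :
    ∃ N, M < N ∧ C ≤ ∑ i ∈ Ico M N, w i := by
  obtain ⟨N, hMN, hN⟩ := ((eventually_gt_atTop M).and
    (hw.eventually_ge_atTop (∑ i ∈ range M, w i + C))).exists
  exact ⟨N, hMN, by rw [sum_Ico_eq_sub _ hMN.le]; linarith⟩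

lemma exists_lt_sum_Ico_rpow_one_sub_le_one {w : ℕ → ℝ} (hw : ∀ n, 0 ≤ w n) (hw1 : ∀ n, w n ≤ 1)
    (hdiv : Tendsto (fun n ↦ ∑ i ∈ range n, w i) atTop atTop) (p : ℝ) (M : ℕ) :
    ∃ N, M < N ∧ (∑ i ∈ Ico M N, w i) ^ (1 - p) ≤ 1 := by
  rcases le_total p 1 with hp | hp
  · refine ⟨M + 1, M.lt_succ_self, ?_⟩
    rw [Nat.Ico_succ_singleton, sum_singleton]
    exact Real.rpow_le_one (hw M) (hw1 M) (sub_nonneg.2 hp)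
  · obtain ⟨N, hMN, hN⟩ := exists_lt_le_sum_Ico_of_tendsto_atTop hdiv 1 M
    exact ⟨N, hMN, Real.rpow_le_one_of_one_le_of_nonpos hN (sub_nonpos.2 hp)⟩

lemma one_div_rpow_one_sub {x : ℝ} (hx : 0 ≤ x) (p : ℝ) : (1 / x) ^ (1 - p) = x ^ (p - 1) := by
  rw [one_div, Real.inv_rpow hx, ← Real.rpow_neg hx, neg_sub]

theorem stmt_5_general (p : ℝ) (hp : 0 < p) :
    ¬ ∃ A : ℝ, 0 < A ∧ ∀ u : ℕ → ℝ, (Function.support u).Finite → u 0 = 0 →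
      ∑' n : ℕ, |u (n + 1) - u n| ^ p * ((n : ℝ) + 1) ^ (p - 1) ≥
        A * ∑' n : ℕ, |u (n + 1)| ^ p / ((n : ℝ) + 1) := by
  rintro ⟨A, hA, hardy⟩
  let w : ℕ → ℝ := fun n ↦ 1 / ((n : ℝ) + 1)
  have hw : ∀ n, 0 < w n := fun n ↦ Nat.one_div_pos_of_nat
  have hw1 : ∀ n, w n ≤ 1 := fun n ↦ div_le_one_of_le₀ (by simp) n.cast_add_one_pos.le
  have hdiv : Tendsto (fun n ↦ ∑ i ∈ range n, w i) atTop atTop :=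
    Real.tendsto_sum_range_one_div_nat_succ_atTop
  have hw_rpow : ∀ n : ℕ, w n ^ (1 - p) = ((n : ℝ) + 1) ^ (p - 1) := fun n ↦
    one_div_rpow_one_sub n.cast_add_one_pos.le p
  obtain ⟨M, hM, hM_large⟩ := ((eventually_ne_atTop 0).and
    (hdiv.eventually_gt_atTop (2 / A))).exists
  obtain ⟨N, hMN, hN⟩ := exists_lt_sum_Ico_rpow_one_sub_le_one (fun n ↦ (hw n).le) hw1 hdiv p M
  have h_upper : A * ∑ n ∈ range M, w n ≤ w 0 ^ (1 - p) + (∑ n ∈ Ico M N, w n) ^ (1 - p) := by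
    refine mul_sum_range_le_of_weighted_hardy hp.ne' hw hA.le (fun u hu hu0 ↦ ?_) hM hMN
    simpa only [hw_rpow, w, mul_one_div] using hardy u hu hu0
  have h_jump : w 0 ^ (1 - p) ≤ 1 := by simp [w]
  rw [div_lt_iff₀' hA] at hM_large
  linarith

/-- Corollary 2.4 (non-existence in the critical case): there is no constant `A > 0` such
that `∑ |u_n - u_{n-1}|^p n^{p-1} ≥ A ∑ |u_n|^p / n` for all finitely supported `u`
with `u 0 = 0`. -/
theorem stmt_5 (p : ℝ) (hp : 1 < p) :
    ¬ ∃ A : ℝ, 0 < A ∧ ∀ u : ℕ → ℝ, (Function.support u).Finite → u 0 = 0 →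
      ∑' n : ℕ, |u (n + 1) - u n| ^ p * ((n : ℝ) + 1) ^ (p - 1) ≥
        A * ∑' n : ℕ, |u (n + 1)| ^ p / ((n : ℝ) + 1) :=
  stmt_5_general p (zero_lt_one.trans hp)
end

section
/- Let γ be a real number with 1 < γ < 2, and for each positive integer n let S_n = ∑_{k=1}^n k^{γ-1}. Then for every integer n ≥ 2, S_{n-1} + S_n < 2 n^γ / γ. -/
/-!
Since `0 ^ (γ - 1) = 0`, the sum `S_{n-1} + S_n` is twice the value that the trapezoidal rule with
unit steps gives for `∫ x in 0..n, x ^ (γ - 1) = n ^ γ / γ`. The integrand is strictly concave, so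
its graph lies above the chords and the rule underestimates the integral.
-/

open Finset MeasureTheory

section TrapezoidalRule

variable {f : ℝ → ℝ} {a b : ℝ}

lemma secant_lt_of_strictConcaveOn (hf : StrictConcaveOn ℝ (Set.Icc a b) f) {x : ℝ}
    (hx : x ∈ Set.Ioo a b) : f a + slope f a b * (x - a) < f x := by
  have hab : a < b := hx.1.trans hx.2
  have slope_lt : (f b - f a) / (b - a) < (f x - f a) / (x - a) :=
    hf.secant_strict_mono (Set.left_mem_Icc.2 hab.le) (Set.Ioo_subset_Icc_self hx)
      (Set.right_mem_Icc.2 hab.le) hx.1.ne' hab.ne' hx.2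
  rw [← slope_def_field, lt_div_iff₀ (sub_pos.2 hx.1)] at slope_lt
  linarith

lemma integral_secant (f : ℝ → ℝ) (a b : ℝ) :
    ∫ x in a..b, (f a + slope f a b * (x - a)) = (b - a) / 2 * (f a + f b) := by
  have slope_mul : slope f a b * (b - a) = f b - f a := by
    rw [mul_comm]
    exact sub_smul_slope f a b
  have integral_sub : ∫ x in a..b, (x - a) = (b - a) ^ 2 / 2 := by
    simp [intervalIntegral.integral_comp_sub_right (fun x : ℝ => x)]
  rw [intervalIntegral.integral_add (by simp) (Continuous.intervalIntegrable (by fun_prop) _ _),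
    intervalIntegral.integral_const, intervalIntegral.integral_const_mul, integral_sub,
    smul_eq_mul]
  linear_combination (b - a) / 2 * slope_mul

lemma trapezoidal_error_one_neg_of_strictConcaveOn (hab : a < b)
    (hf : StrictConcaveOn ℝ (Set.Icc a b) f) (hfi : IntervalIntegrable f volume a b) :
    trapezoidal_error f 1 a b < 0 := by
  have secant_integrable :
      IntervalIntegrable (fun x => f a + slope f a b * (x - a)) volume a b :=
    Continuous.intervalIntegrable (by fun_prop) _ _
  have gap_pos : 0 < ∫ x in a..b, (f x - (f a + slope f a b * (x - a))) :=
    intervalIntegral.intervalIntegral_pos_of_pos_on (hfi.sub secant_integrable)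
      (fun x hx => sub_pos.2 (secant_lt_of_strictConcaveOn hf hx)) hab
  rw [intervalIntegral.integral_sub hfi secant_integrable, integral_secant] at gap_pos
  rw [trapezoidal_error, trapezoidal_integral_one]
  linarith

theorem trapezoidal_error_neg_of_strictConcaveOn {N : ℕ} (hN : 0 < N) (hab : a < b)
    (hf : StrictConcaveOn ℝ (Set.Icc a b) f) (hfi : IntervalIntegrable f volume a b) :
    trapezoidal_error f N a b < 0 := by
  obtain ⟨h, h_pos, rfl⟩ : ∃ h : ℝ, 0 < h ∧ b = a + N * h :=
    ⟨(b - a) / N, div_pos (sub_pos.2 hab) (by positivity), by field⟩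
  rw [← sum_trapezoidal_error_adjacent_intervals hN hfi]
  refine sum_neg (fun i hi => ?_) (nonempty_range_iff.2 hN.ne')
  have step_lt : a + i * h < a + (i + 1) * h := by linarith
  have step_subset : Set.Icc (a + i * h) (a + (i + 1) * h) ⊆ Set.Icc a (a + N * h) := by
    have hiN : (i + 1 : ℝ) ≤ N := mod_cast mem_range.1 hi
    exact Set.Icc_subset_Icc (le_add_of_nonneg_right (by positivity)) (by gcongr)
  refine trapezoidal_error_one_neg_of_strictConcaveOn step_lt
    (hf.subset step_subset (convex_Icc _ _)) (hfi.mono_set ?_)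
  rwa [Set.uIcc_of_le step_lt.le, Set.uIcc_of_le hab.le]

lemma two_mul_trapezoidal_integral_zero_natCast (f : ℝ → ℝ) {n : ℕ} (hn : 0 < n) :
    2 * trapezoidal_integral f n 0 n =
      f 0 + (∑ k ∈ Icc 1 (n - 1), f k + ∑ k ∈ Icc 1 n, f k) := by
  obtain ⟨m, rfl⟩ := Nat.exists_eq_add_one.2 hn
  have interior_sum : ∑ k ∈ range m, f (0 + (k + 1) * (((m + 1 : ℕ) : ℝ) - 0) / (m + 1 : ℕ)) =
      ∑ k ∈ Icc 1 m, f k := by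
    rw [range_eq_Ico, ← Ico_add_one_right_eq_Icc, ← sum_Ico_add' (fun k : ℕ => f k) 0 m 1]
    refine sum_congr rfl fun k _ => congrArg f ?_
    push_cast
    field
  rw [trapezoidal_integral, Nat.add_sub_cancel, interior_sum, sub_zero, div_self (by positivity),
    sum_Icc_succ_top (by lia)]
  ring

end TrapezoidalRule

/-- Proposition 4.1 (i): for `1 < γ < 2` and `S_n = ∑_{k=1}^n k^{γ-1}`, one has
`S_{n-1} + S_n < 2 n^γ / γ` for all `n ≥ 2`. -/
theorem stmt_7 (γ : ℝ) (hγ1 : 1 < γ) (hγ2 : γ < 2)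
    (S : ℕ → ℝ) (hS : ∀ n, S n = ∑ k ∈ Finset.Icc 1 n, (k : ℝ) ^ (γ - 1)) :
    ∀ n : ℕ, 2 ≤ n → S (n - 1) + S n < 2 * (n : ℝ) ^ γ / γ := by
  intro n hn
  have hn0 : 0 < n := by lia
  have concave : StrictConcaveOn ℝ (Set.Icc 0 (n : ℝ)) fun x => x ^ (γ - 1) :=
    (Real.strictConcaveOn_rpow (by linarith) (by linarith)).subset Set.Icc_subset_Ici_self
      (convex_Icc _ _)
  have trapezoid_lt : trapezoidal_integral (fun x => x ^ (γ - 1)) n 0 n <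
      ∫ x in (0 : ℝ)..n, x ^ (γ - 1) :=
    sub_neg.1 <| trapezoidal_error_neg_of_strictConcaveOn hn0 (mod_cast hn0) concave
      (intervalIntegral.intervalIntegrable_rpow' (by linarith))
  calc S (n - 1) + S n
      = 2 * trapezoidal_integral (fun x => x ^ (γ - 1)) n 0 n := by
        rw [two_mul_trapezoidal_integral_zero_natCast _ hn0, Real.zero_rpow (by linarith), zero_add,
          hS, hS]
    _ < 2 * ∫ x in (0 : ℝ)..n, x ^ (γ - 1) := by gcongr
    _ = 2 * (n : ℝ) ^ γ / γ := by
        rw [integral_rpow (Or.inl (by linarith)), sub_add_cancel, Real.zero_rpow (by linarith),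
          sub_zero, mul_div_assoc]
end

section
/- Let γ > 0 be a real number, and for each positive integer n let S_n = ∑_{k=1}^n k^{γ-1}. Then for every integer n ≥ 2, S_{n-1} · S_n < n^{2γ} / γ². -/
/-!
If `x ↦ x ^ (p - 1)` is convex, the midpoint Hermite–Hadamard inequality for `x ↦ x ^ p` gives
`2 h p a ^ (p - 1) ≤ (a + h) ^ p - (a - h) ^ p`. At `a = n` this telescopes in two ways:

* for `2 ≤ γ`, `p = γ` and `h = 1 / 2` give `γ S_n ≤ (n + 1 / 2) ^ γ`;
* for `γ ≤ 2`, `p = γ / 2` and `h = 1`, after multiplication by `n ^ (γ / 2)`, give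
  `γ S_n ≤ (n (n + 1)) ^ (γ / 2)`.

The product of two consecutive bounds is `(n ^ 2 - 1 / 4) ^ γ` in the first case and
`(n ^ 2 (n ^ 2 - 1)) ^ (γ / 2)` in the second, both less than `n ^ (2 γ)`.
-/

open Set

theorem convexOn_rpow_of_nonpos {q : ℝ} (hq : q ≤ 0) :
    ConvexOn ℝ (Ioi 0) fun x : ℝ ↦ x ^ q := by
  have hlog : ConvexOn ℝ (Ioi 0) fun x : ℝ ↦ -q * -Real.log x :=
    strictConcaveOn_log_Ioi.concaveOn.neg.smul (neg_nonneg.2 hq)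
  have himage : Convex ℝ ((fun x : ℝ ↦ -q * -Real.log x) '' Ioi 0) :=
    ((convex_Ioi (0 : ℝ)).isPreconnected.image _
      (by fun_prop (disch := exact fun x hx ↦ ne_of_gt hx))).ordConnected.convex
  refine ((convexOn_exp.subset (subset_univ _) himage).comp hlog
    (Real.exp_monotone.monotoneOn _)).congr fun x hx ↦ ?_
  simp [Real.rpow_def_of_pos hx, mul_comm]

theorem two_mul_mul_le_sub_of_hasDerivAt_of_convexOn {F f : ℝ → ℝ} {a h : ℝ} (hh : 0 ≤ h)
    (hF : ContinuousOn F (Icc (a - h) (a + h)))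
    (hF' : ∀ x ∈ Ioo (a - h) (a + h), HasDerivAt F (f x) x)
    (hf : ConvexOn ℝ (Ioo (a - h) (a + h)) f) :
    2 * h * f a ≤ F (a + h) - F (a - h) := by
  let G : ℝ → ℝ := fun t ↦ F (a + t) - F (a - t) - 2 * t * f a
  have hG : MonotoneOn G (Icc 0 h) := by
    refine monotoneOn_of_hasDerivWithinAt_nonneg (convex_Icc 0 h)
      (f' := fun t ↦ f (a + t) + f (a - t) - 2 * f a) ?_ (fun t ht ↦ ?_) (fun t ht ↦ ?_)
    · refine ((hF.comp (by fun_prop) fun t ht ↦ ?_).sub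
        (hF.comp (by fun_prop) fun t ht ↦ ?_)).sub (by fun_prop) <;>
      constructor <;> linarith [ht.1, ht.2]
    all_goals
      rw [interior_Icc] at ht
      have hadd : a + t ∈ Ioo (a - h) (a + h) := by constructor <;> linarith [ht.1, ht.2]
      have hsub : a - t ∈ Ioo (a - h) (a + h) := by constructor <;> linarith [ht.1, ht.2]
    · have := (((hF' _ hadd).comp_const_add a t).sub ((hF' _ hsub).comp_const_sub a t)).sub
        (((hasDerivAt_id t).const_mul 2).mul_const (f a))
      exact (this.congr_deriv (by ring)).hasDerivWithinAt
    · have hmid := hf.2 hadd hsub (by norm_num : (0 : ℝ) ≤ 1 / 2) (by norm_num : (0 : ℝ) ≤ 1 / 2)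
        (by norm_num)
      simp only [smul_eq_mul, show 1 / 2 * (a + t) + 1 / 2 * (a - t) = a by ring] at hmid
      linarith
  have hG0h : G 0 ≤ G h := hG (left_mem_Icc.2 hh) (right_mem_Icc.2 hh) hh
  simp only [G, add_zero, sub_zero, sub_self, mul_zero, zero_mul] at hG0h
  linarith

theorem two_mul_mul_rpow_le_add_rpow_sub_sub_rpow {p a h : ℝ} (hp : 0 ≤ p)
    (hconv : ConvexOn ℝ (Ioi 0) fun x : ℝ ↦ x ^ (p - 1)) (hh : 0 ≤ h) (hha : h ≤ a) :
    2 * h * (p * a ^ (p - 1)) ≤ (a + h) ^ p - (a - h) ^ p := by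
  have hpos : Ioo (a - h) (a + h) ⊆ Ioi 0 := fun x hx ↦ (sub_nonneg.2 hha).trans_lt hx.1
  exact two_mul_mul_le_sub_of_hasDerivAt_of_convexOn (F := fun x ↦ x ^ p) hh
    (Real.continuous_rpow_const hp).continuousOn
    (fun x hx ↦ Real.hasDerivAt_rpow_const (Or.inl (ne_of_gt (hpos hx))))
    ((hconv.subset hpos (convex_Ioo _ _)).smul hp)

theorem sum_Icc_one_le_of_le_sub {M : Type*} [AddCommGroup M] [PartialOrder M]
    [IsOrderedAddMonoid M] {u V : ℕ → M} (hV : 0 ≤ V 0) (huV : ∀ n, u (n + 1) ≤ V (n + 1) - V n)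
    (n : ℕ) : ∑ k ∈ Finset.Icc 1 n, u k ≤ V n := by
  induction n with
  | zero => simpa using hV
  | succ n ih =>
    rw [Finset.sum_Icc_succ_top (by lia)]
    exact (add_le_add ih (huV n)).trans_eq (add_sub_cancel _ _)

theorem mul_lt_rpow_div_sq {c p A B u v w : ℝ} (hc : 0 < c) (hp : 0 < p) (hB₀ : 0 ≤ B)
    (hu : 0 ≤ u) (hv : 0 ≤ v) (hA : A ≤ u ^ p / c) (hB : B ≤ v ^ p / c) (huv : u * v < w) :
    A * B < w ^ p / c ^ 2 := by
  calc A * B ≤ u ^ p / c * (v ^ p / c) := mul_le_mul hA hB hB₀ (by positivity)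
    _ = (u * v) ^ p / c ^ 2 := by rw [Real.mul_rpow hu hv, div_mul_div_comm, sq]
    _ < w ^ p / c ^ 2 := by gcongr

section PowerSums

variable {γ : ℝ}

theorem sum_Icc_rpow_sub_one_le_add_half_rpow_div (hγ : 0 < γ)
    (hconv : ConvexOn ℝ (Ioi 0) fun x : ℝ ↦ x ^ (γ - 1)) (n : ℕ) :
    ∑ k ∈ Finset.Icc 1 n, (k : ℝ) ^ (γ - 1) ≤ ((n : ℝ) + 1 / 2) ^ γ / γ := by
  refine sum_Icc_one_le_of_le_sub (V := fun n : ℕ ↦ ((n : ℝ) + 1 / 2) ^ γ / γ)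
    (by positivity) (fun n ↦ ?_) n
  have hdiff := two_mul_mul_rpow_le_add_rpow_sub_sub_rpow hγ.le hconv
    (a := (n : ℝ) + 1) (h := 1 / 2) (by norm_num) (by linarith [n.cast_nonneg (α := ℝ)])
  rw [show (n : ℝ) + 1 - 1 / 2 = n + 1 / 2 by ring] at hdiff
  rw [← sub_div, le_div_iff₀ hγ]
  push_cast
  linarith

theorem sum_Icc_rpow_sub_one_le_mul_add_one_rpow_div (hγ : 0 < γ)
    (hconv : ConvexOn ℝ (Ioi 0) fun x : ℝ ↦ x ^ (γ / 2 - 1)) (n : ℕ) :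
    ∑ k ∈ Finset.Icc 1 n, (k : ℝ) ^ (γ - 1) ≤ ((n : ℝ) * (n + 1)) ^ (γ / 2) / γ := by
  refine sum_Icc_one_le_of_le_sub (V := fun n : ℕ ↦ ((n : ℝ) * (n + 1)) ^ (γ / 2) / γ)
    (by positivity) (fun n ↦ ?_) n
  have hdiff := two_mul_mul_rpow_le_add_rpow_sub_sub_rpow (half_pos hγ).le hconv
    (a := (n : ℝ) + 1) (h := 1) (by norm_num) (by linarith [n.cast_nonneg (α := ℝ)])
  rw [add_sub_cancel_right] at hdiff
  rw [← sub_div, le_div_iff₀ hγ]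
  push_cast
  calc ((n : ℝ) + 1) ^ (γ - 1) * γ
      = (n + 1) ^ (γ / 2) * (2 * 1 * (γ / 2 * (n + 1) ^ (γ / 2 - 1))) := by
        rw [show γ - 1 = γ / 2 + (γ / 2 - 1) by ring, Real.rpow_add (by positivity)]
        ring
    _ ≤ (n + 1) ^ (γ / 2) * ((n + 1 + 1) ^ (γ / 2) - n ^ (γ / 2)) := by gcongr
    _ = ((n + 1) * (n + 1 + 1)) ^ (γ / 2) - (n * (n + 1)) ^ (γ / 2) := by
        rw [Real.mul_rpow (by positivity) (by positivity),
          Real.mul_rpow (by positivity) (by positivity)]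
        ring

end PowerSums

/-- Proposition 4.1 (ii): for `γ > 0` and `S_n = ∑_{k=1}^n k^{γ-1}`, one has
`S_{n-1} · S_n < n^{2γ} / γ²` for all `n ≥ 2`. -/
theorem stmt_8 (γ : ℝ) (hγ : 0 < γ)
    (S : ℕ → ℝ) (hS : ∀ n, S n = ∑ k ∈ Finset.Icc 1 n, (k : ℝ) ^ (γ - 1)) :
    ∀ n : ℕ, 2 ≤ n → S (n - 1) * S n < (n : ℝ) ^ (2 * γ) / γ ^ 2 := by
  intro n hn
  obtain ⟨m, rfl⟩ : ∃ m, n = m + 1 := ⟨n - 1, by lia⟩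
  have hS₀ : 0 ≤ S (m + 1) := hS (m + 1) ▸ Finset.sum_nonneg fun k _ ↦ by positivity
  rw [Nat.add_sub_cancel]
  rcases le_total γ 2 with hγ2 | hγ2
  · have hle (n : ℕ) : S n ≤ ((n : ℝ) * (n + 1)) ^ (γ / 2) / γ := hS n ▸
      sum_Icc_rpow_sub_one_le_mul_add_one_rpow_div hγ (convexOn_rpow_of_nonpos (by linarith)) n
    rw [show 2 * γ = (4 : ℕ) * (γ / 2) by push_cast; ring, Real.rpow_natCast_mul (by positivity)]
    refine mul_lt_rpow_div_sq hγ (half_pos hγ) hS₀ (by positivity) (by positivity)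
      (hle m) (hle (m + 1)) ?_
    push_cast
    nlinarith [sq_pos_of_pos (m.cast_add_one_pos (α := ℝ))]
  · have hle (n : ℕ) : S n ≤ ((n : ℝ) + 1 / 2) ^ γ / γ := hS n ▸
      sum_Icc_rpow_sub_one_le_add_half_rpow_div hγ
        ((convexOn_rpow (by linarith)).subset Ioi_subset_Ici_self (convex_Ioi 0)) n
    rw [show 2 * γ = (2 : ℕ) * γ by norm_num, Real.rpow_natCast_mul (by positivity)]
    refine mul_lt_rpow_div_sq hγ hγ hS₀ (by positivity) (by positivity) (hle m) (hle (m + 1)) ?_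
    push_cast
    linarith
end

section
/- Let γ be any real number, and for each positive integer n let S_n = ∑_{k=1}^n k^{γ-1}. Then for every integer n ≥ 2, S_n > exp(γ/n) · S_{n-1}. -/
/-!
Put `x = γ / n` and `A n = n ^ (γ - 1) / (exp x - 1)`. Since `S n = S (n - 1) + n ^ (γ - 1)`, for
`0 < γ` the claim says `S (n - 1) < A n`, and it is trivial for `γ ≤ 0`.

* For `γ ≤ 1`, comparison with the integral of `t ^ (γ - 1)` gives
  `S (n - 1) ≤ (n - 1) ^ γ / γ ≤ n ^ (γ - 1) * exp (-x) / x`, and `1 - exp (-x) < x`.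
* For `1 ≤ γ ≤ 2` the function `t ^ (γ - 1)` is concave, so the trapezoidal rule gives
  `S (n - 1) ≤ n ^ (γ - 1) * (1 / x - 1 / 2)`, and `1 / x - 1 / 2 < 1 / (exp x - 1)`.
* For `2 ≤ γ` one has `A n + n ^ (γ - 1) ≤ A (n + 1)`, and summing this telescopes. In terms of
  `φ x = log (sinh x / x)` the inequality reads
  `l * (1 / n + 1 / (n + 1) - 2 * log ((n + 1) / n)) ≤ φ (l / n) - φ (l / (n + 1))`, `l = γ / 2`.
  As `φ` is convex, the general case follows from `l = 1`, which in turn says that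
  `(x * coth x - 1) / x ^ 2` decreases from `x = 1 / (n + 1)` to `x = 1 / n`.
-/

open Real Set

section Hyperbolic

variable {x y l : ℝ}

lemma monotoneOn_of_hasDerivAt_nonneg {D : Set ℝ} (hD : Convex ℝ D) {f f' : ℝ → ℝ}
    (hf : ∀ x ∈ D, HasDerivAt f (f' x) x) (hf' : ∀ x ∈ interior D, 0 ≤ f' x) :
    MonotoneOn f D :=
  monotoneOn_of_hasDerivWithinAt_nonneg hD
    (fun x hx ↦ (hf x hx).continuousAt.continuousWithinAt)
    (fun x hx ↦ (hf x (interior_subset hx)).hasDerivWithinAt) hf'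

lemma sinh_lt_mul_cosh (hx : 0 < x) : sinh x < x * cosh x := by
  have hderiv (y : ℝ) : HasDerivAt (fun y ↦ y * cosh y - sinh y) (y * sinh y) y :=
    (((hasDerivAt_id y).mul (hasDerivAt_cosh y)).sub (hasDerivAt_sinh y)).congr_deriv (by simp)
  have hmono : StrictMonoOn (fun y ↦ y * cosh y - sinh y) (Ici 0) :=
    strictMonoOn_of_hasDerivWithinAt_pos (convex_Ici 0) (by fun_prop)
      (fun y _ ↦ (hderiv y).hasDerivWithinAt) fun y hy ↦ by
        rw [interior_Ici] at hy
        exact mul_pos hy (sinh_pos_iff.2 hy)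
  simpa using hmono self_mem_Ici hx.le hx

lemma two_mul_cosh_sub_one_le (hx : 0 ≤ x) : 2 * (cosh x - 1) ≤ x * sinh x := by
  obtain ⟨y, rfl⟩ : ∃ y, x = 2 * y := ⟨x / 2, by ring⟩
  rcases (by linarith : 0 ≤ y).eq_or_lt with rfl | hy
  · simp
  calc 2 * (cosh (2 * y) - 1) = 4 * sinh y * sinh y := by
        rw [cosh_two_mul, cosh_sq]; ring
    _ ≤ 4 * sinh y * (y * cosh y) := by
        have := sinh_pos_iff.2 hy
        gcongr
        exact (sinh_lt_mul_cosh hy).le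
    _ = 2 * y * sinh (2 * y) := by rw [sinh_two_mul]; ring

lemma three_mul_sinh_le (hx : 0 ≤ x) : 3 * sinh x ≤ x * (cosh x + 2) := by
  have hderiv (y : ℝ) : HasDerivAt (fun y ↦ y * (cosh y + 2) - 3 * sinh y)
      (y * sinh y - 2 * (cosh y - 1)) y :=
    (((hasDerivAt_id y).mul ((hasDerivAt_cosh y).add_const 2)).sub
      ((hasDerivAt_sinh y).const_mul 3)).congr_deriv (by simp only [id]; ring)
  have hmono : MonotoneOn (fun y ↦ y * (cosh y + 2) - 3 * sinh y) (Ici 0) :=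
    monotoneOn_of_hasDerivAt_nonneg (convex_Ici 0) (fun y _ ↦ hderiv y)
      fun y hy ↦ sub_nonneg.2 (two_mul_cosh_sub_one_le (interior_subset hy))
  simpa using hmono self_mem_Ici hx hx

lemma four_mul_cosh_sub_one_le (hx : 0 ≤ x) : 4 * (cosh x - 1) ≤ x * sinh x + x ^ 2 := by
  have hderiv (y : ℝ) : HasDerivAt (fun y ↦ y * sinh y + y ^ 2 - 4 * (cosh y - 1))
      (y * (cosh y + 2) - 3 * sinh y) y :=
    ((((hasDerivAt_id y).mul (hasDerivAt_sinh y)).add (hasDerivAt_pow 2 y)).sub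
      (((hasDerivAt_cosh y).sub_const 1).const_mul 4)).congr_deriv (by
        simp only [id, Nat.cast_ofNat, Nat.add_one_sub_one, pow_one]; ring)
  have hmono : MonotoneOn (fun y ↦ y * sinh y + y ^ 2 - 4 * (cosh y - 1)) (Ici 0) :=
    monotoneOn_of_hasDerivAt_nonneg (convex_Ici 0) (fun y _ ↦ hderiv y)
      fun y hy ↦ sub_nonneg.2 (three_mul_sinh_le (interior_subset hy))
  simpa using hmono self_mem_Ici hx hx

/-- The Langevin function `coth x - 1 / x`, the derivative of `log (sinh x / x)`. -/
noncomputable def langevin (x : ℝ) : ℝ := cosh x / sinh x - x⁻¹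

lemma hasDerivAt_langevin (hx : 0 < x) :
    HasDerivAt langevin ((x ^ 2)⁻¹ - (sinh x ^ 2)⁻¹) x := by
  have hs : sinh x ≠ 0 := (sinh_pos_iff.2 hx).ne'
  refine (((hasDerivAt_cosh x).div (hasDerivAt_sinh x) hs).sub
    (hasDerivAt_inv hx.ne')).congr_deriv ?_
  field_simp
  linear_combination (-x ^ 2) * cosh_sq x

lemma langevin_pos (hx : 0 < x) : 0 < langevin x := by
  have hs : 0 < sinh x := sinh_pos_iff.2 hx
  rw [langevin, sub_pos, inv_eq_one_div, div_lt_div_iff₀ hx hs]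
  linarith [sinh_lt_mul_cosh hx]

lemma monotoneOn_langevin : MonotoneOn langevin (Ioi 0) :=
  monotoneOn_of_hasDerivAt_nonneg (convex_Ioi 0) (fun _ ↦ hasDerivAt_langevin) fun x hx ↦ by
    have hx : 0 < x := interior_subset hx
    have : x ≤ sinh x := self_le_sinh_iff.2 hx.le
    rw [sub_nonneg]
    gcongr

lemma mul_inv_sq_sub_inv_sinh_sq_le_langevin (hx : 0 < x) :
    x * ((x ^ 2)⁻¹ - (sinh x ^ 2)⁻¹) ≤ langevin x := by
  have : 0 < sinh x := sinh_pos_iff.2 hx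
  have hdouble := four_mul_cosh_sub_one_le (x := 2 * x) (by positivity)
  rw [cosh_two_mul, sinh_two_mul, cosh_sq] at hdouble
  have hnum : 0 ≤ x * cosh x * sinh x + x ^ 2 - 2 * sinh x ^ 2 := by linarith
  rw [← sub_nonneg]
  calc 0 ≤ (x * cosh x * sinh x + x ^ 2 - 2 * sinh x ^ 2) / (x * sinh x ^ 2) := by positivity
    _ = langevin x - x * ((x ^ 2)⁻¹ - (sinh x ^ 2)⁻¹) := by
        rw [langevin]; field_simp; ring

lemma antitoneOn_langevin_div : AntitoneOn (fun x ↦ langevin x / x) (Ioi 0) := by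
  have hderiv : ∀ x ∈ Ioi (0 : ℝ), HasDerivAt (fun x ↦ langevin x / x)
      ((((x ^ 2)⁻¹ - (sinh x ^ 2)⁻¹) * x - langevin x * 1) / x ^ 2) x :=
    fun x hx ↦ (hasDerivAt_langevin hx).div (hasDerivAt_id x) (ne_of_gt hx)
  refine antitoneOn_of_hasDerivWithinAt_nonpos (convex_Ioi 0)
    (fun x hx ↦ (hderiv x hx).continuousAt.continuousWithinAt)
    (fun x hx ↦ (hderiv x (interior_subset hx)).hasDerivWithinAt)
    fun x hx ↦ div_nonpos_of_nonpos_of_nonneg ?_ (sq_nonneg x)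
  linarith [mul_inv_sq_sub_inv_sinh_sq_le_langevin (interior_subset hx)]

/-- The function `log (sinh x / x)`, whose convexity reduces exponents `γ ≥ 2` to `γ = 2`.
Division by zero gives it the value `0` at `x = 0`, which is also its limit there. -/
noncomputable def logSinhc (x : ℝ) : ℝ := log (sinh x / x)

lemma hasDerivAt_logSinhc (hx : 0 < x) : HasDerivAt logSinhc (langevin x) x := by
  have : 0 < sinh x := sinh_pos_iff.2 hx
  refine (((hasDerivAt_sinh x).div (hasDerivAt_id x) hx.ne').log (by
    simp only [id, Pi.div_apply]; positivity)).congr_deriv ?_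
  simp only [langevin, id, Pi.div_apply]
  field_simp

lemma mul_logSinhc_sub_le (hl : 1 ≤ l) (hy : 0 < y) (hyx : y ≤ x) :
    l * (logSinhc x - logSinhc y) ≤ logSinhc (l * x) - logSinhc (l * y) := by
  have hl₀ : 0 < l := by linarith
  have hmono : MonotoneOn (fun z ↦ logSinhc (l * z) - l * logSinhc z) (Ioi 0) :=
    monotoneOn_of_hasDerivAt_nonneg (convex_Ioi 0) (fun z (hz : 0 < z) ↦
      ((hasDerivAt_logSinhc (mul_pos hl₀ hz)).comp z ((hasDerivAt_id z).const_mul l)).sub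
        ((hasDerivAt_logSinhc hz).const_mul l)) fun z hz ↦ by
      have hz : 0 < z := interior_subset hz
      have hle : langevin z ≤ langevin (l * z) :=
        monotoneOn_langevin hz (mul_pos hl₀ hz) (le_mul_of_one_le_left hz.le hl)
      linarith [mul_le_mul_of_nonneg_left hle hl₀.le]
  have := hmono hy (hy.trans_le hyx) hyx
  simp only at this
  linarith

lemma exp_two_mul_sub_one (x : ℝ) : exp (2 * x) - 1 = 2 * exp x * sinh x := by
  rw [sinh_eq, two_mul, exp_add, exp_neg]
  field_simp

lemma inv_exp_two_mul_sub_one (hx : 0 < x) :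
    (exp (2 * x) - 1)⁻¹ = (langevin x + x⁻¹ - 1) / 2 := by
  have : 0 < sinh x := sinh_pos_iff.2 hx
  have hexp : (cosh x - sinh x) * exp x = 1 := by
    rw [cosh_sub_sinh, ← exp_add, neg_add_cancel, exp_zero]
  rw [exp_two_mul_sub_one, langevin]
  field_simp
  linear_combination -x * hexp

lemma log_exp_two_mul_sub_one (hx : 0 < x) :
    log (exp (2 * x) - 1) = x + log (2 * x) + logSinhc x := by
  have : 0 < sinh x := sinh_pos_iff.2 hx
  have hfactor : exp (2 * x) - 1 = exp x * (2 * x) * (sinh x / x) := by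
    rw [exp_two_mul_sub_one]; field_simp
  rw [hfactor, log_mul (by positivity) (by positivity), log_mul (by positivity) (by positivity),
    log_exp, logSinhc]

lemma inv_sub_half_lt_inv_exp_sub_one (hx : 0 < x) : x⁻¹ - 1 / 2 < (exp x - 1)⁻¹ := by
  have h := inv_exp_two_mul_sub_one (half_pos hx)
  rw [mul_div_cancel₀ x two_ne_zero, inv_div] at h
  have := langevin_pos (half_pos hx)
  rw [h, inv_eq_one_div]
  linarith [show 2 / x = 2 * (1 / x) by ring]

lemma exp_neg_div_lt_inv_exp_sub_one (hx : 0 < x) : exp (-x) / x < (exp x - 1)⁻¹ := by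
  have hpos : 0 < exp x - 1 := sub_pos.2 (one_lt_exp_iff.2 hx)
  have hexp : exp (-x) * exp x = 1 := by rw [← exp_add, neg_add_cancel, exp_zero]
  rw [inv_eq_one_div, div_lt_div_iff₀ hx hpos]
  linarith [add_one_lt_exp (neg_ne_zero.2 hx.ne')]

end Hyperbolic

section Rpow

variable {p x y : ℝ}

lemma rpow_le_rpow_add_mul_sub (hp₀ : 0 ≤ p) (hp₁ : p ≤ 1) (hx : 0 < x) (hy : 0 ≤ y) :
    y ^ p ≤ x ^ p + p * x ^ (p - 1) * (y - x) := by
  have hbernoulli := rpow_one_add_le_one_add_mul_self (s := y / x - 1)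
    (by linarith [div_nonneg hy hx.le]) hp₀ hp₁
  rw [add_sub_cancel, div_rpow hy hx.le, div_le_iff₀ (by positivity)] at hbernoulli
  calc y ^ p ≤ (1 + p * (y / x - 1)) * x ^ p := hbernoulli
    _ = x ^ p + p * x ^ (p - 1) * (y - x) := by rw [rpow_sub_one hx.ne']; field_simp

lemma trapezoid_rpow_le_rpow_sub_rpow (hp₁ : 1 ≤ p) (hp₂ : p ≤ 2) (hx : 0 < x) (hxy : x ≤ y) :
    p * (y - x) * (x ^ (p - 1) + y ^ (p - 1)) / 2 ≤ y ^ p - x ^ p := by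
  have hderiv : ∀ z ∈ Ici x, HasDerivAt
      (fun z ↦ z ^ p - p / 2 * ((z - x) * (x ^ (p - 1) + z ^ (p - 1))))
      (p / 2 * (z ^ (p - 1) + (p - 1) * z ^ (p - 1 - 1) * (x - z) - x ^ (p - 1))) z := by
    intro z hz
    have hz₀ : z ≠ 0 := (hx.trans_le hz).ne'
    refine ((hasDerivAt_rpow_const (Or.inl hz₀)).sub ((((hasDerivAt_id z).sub_const x).mul
      ((hasDerivAt_rpow_const (Or.inl hz₀)).const_add _)).const_mul (p / 2))).congr_deriv ?_
    simp only [id]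
    ring
  have hmono : MonotoneOn
      (fun z ↦ z ^ p - p / 2 * ((z - x) * (x ^ (p - 1) + z ^ (p - 1)))) (Ici x) :=
    monotoneOn_of_hasDerivAt_nonneg (convex_Ici x) hderiv fun z hz ↦ by
      have htangent := rpow_le_rpow_add_mul_sub (p := p - 1) (by linarith) (by linarith)
        (hx.trans_le (interior_subset hz)) hx.le
      exact mul_nonneg (by linarith) (by linarith)
  have := hmono self_mem_Ici hxy hxy
  simp only [sub_self, zero_mul, mul_zero, sub_zero] at this
  linarith

end Rpow

lemma sum_Icc_one_le_sub {M : Type*} [AddCommGroup M] [PartialOrder M] [IsOrderedAddMonoid M]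
    {f g : ℕ → M} (h : ∀ k, g (k + 1) ≤ f (k + 1) - f k) (m : ℕ) :
    ∑ k ∈ Finset.Icc 1 m, g k ≤ f m - f 0 := by
  induction m with
  | zero => simp
  | succ m ih =>
    rw [Finset.sum_Icc_succ_top (by lia)]
    exact (add_le_add ih (h m)).trans_eq (by abel)

/-- The number `t ^ (γ - 1) / (exp (γ / t) - 1)`: for `0 < γ`, a sum `s` satisfies
`exp (γ / t) * s < s + t ^ (γ - 1)` exactly when it lies below this threshold. -/
noncomputable def threshold (γ t : ℝ) : ℝ := t ^ (γ - 1) * (exp (γ / t) - 1)⁻¹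

section Threshold

variable {γ t : ℝ}

lemma exp_div_sub_one_pos (hγ : 0 < γ) (ht : 0 < t) : 0 < exp (γ / t) - 1 :=
  sub_pos.2 (one_lt_exp_iff.2 (by positivity))

lemma threshold_pos (hγ : 0 < γ) (ht : 0 < t) : 0 < threshold γ t :=
  mul_pos (by positivity) (inv_pos.2 (exp_div_sub_one_pos hγ ht))

lemma exp_mul_lt_add_rpow_iff (hγ : 0 < γ) (ht : 0 < t) {s : ℝ} :
    exp (γ / t) * s < s + t ^ (γ - 1) ↔ s < threshold γ t := by
  rw [threshold, ← div_eq_mul_inv, lt_div_iff₀ (exp_div_sub_one_pos hγ ht)]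
  constructor <;> intro h <;> linarith

lemma threshold_add_rpow (hγ : 0 < γ) (ht : 0 < t) :
    threshold γ t + t ^ (γ - 1) = exp (γ / t) * threshold γ t := by
  have := (exp_div_sub_one_pos hγ ht).ne'
  rw [threshold]
  field_simp
  ring

lemma rpow_div_sub_half_lt_threshold (hγ : 0 < γ) (ht : 0 < t) :
    t ^ γ / γ - t ^ (γ - 1) / 2 < threshold γ t := by
  have hpos : 0 < t ^ (γ - 1) := by positivity
  calc t ^ γ / γ - t ^ (γ - 1) / 2 = t ^ (γ - 1) * ((γ / t)⁻¹ - 1 / 2) := by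
        rw [rpow_sub_one ht.ne']; field_simp
    _ < threshold γ t :=
        mul_lt_mul_of_pos_left (inv_sub_half_lt_inv_exp_sub_one (by positivity)) hpos

lemma sub_one_rpow_div_lt_threshold (hγ : 0 < γ) (ht : 1 ≤ t) :
    (t - 1) ^ γ / γ < threshold γ t := by
  have ht₀ : 0 < t := by linarith
  have hbase : t - 1 ≤ t * exp (-(1 / t)) := by
    calc t - 1 = t * (1 - 1 / t) := by field_simp
      _ ≤ t * exp (-(1 / t)) := by gcongr; exact one_sub_le_exp_neg _
  calc (t - 1) ^ γ / γ ≤ (t * exp (-(1 / t))) ^ γ / γ := by gcongr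
    _ = t ^ (γ - 1) * (exp (-(γ / t)) / (γ / t)) := by
        rw [mul_rpow ht₀.le (exp_pos _).le, ← exp_mul, rpow_sub_one ht₀.ne',
          show -(1 / t) * γ = -(γ / t) by ring]
        field_simp
    _ < threshold γ t :=
        mul_lt_mul_of_pos_left (exp_neg_div_lt_inv_exp_sub_one (by positivity)) (by positivity)

lemma log_threshold (hγ : 0 < γ) (ht : 0 < t) :
    log (threshold γ t) = γ * log t - log γ - γ / 2 / t - logSinhc (γ / 2 / t) := by
  have hpos := exp_div_sub_one_pos hγ ht
  have hdouble : γ / t = 2 * (γ / 2 / t) := by ring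
  rw [threshold, log_mul (by positivity) (by positivity), log_rpow ht, log_inv, hdouble,
    log_exp_two_mul_sub_one (by positivity), ← hdouble, log_div hγ.ne' ht.ne']
  ring

lemma threshold_add_rpow_le_threshold_add_one_iff (hγ : 0 < γ) (ht : 0 < t) :
    threshold γ t + t ^ (γ - 1) ≤ threshold γ (t + 1) ↔
      γ / 2 * (1 / t + 1 / (t + 1) - 2 * (log (t + 1) - log t)) ≤
        logSinhc (γ / 2 / t) - logSinhc (γ / 2 / (t + 1)) := by
  have ht₁ : 0 < t + 1 := by positivity
  have hpos := threshold_pos hγ ht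
  rw [threshold_add_rpow hγ ht, ← log_le_log_iff (by positivity) (threshold_pos hγ ht₁),
    log_mul (exp_pos _).ne' hpos.ne', log_exp, log_threshold hγ ht, log_threshold hγ ht₁]
  constructor <;> intro h <;> linear_combination h

lemma threshold_two_add_le_threshold_two_add_one (ht : 0 < t) :
    threshold 2 t + t ≤ threshold 2 (t + 1) := by
  have hthreshold {s : ℝ} (hs : 0 < s) :
      threshold 2 s = (langevin s⁻¹ / s⁻¹ + s ^ 2 - s) / 2 := by
    rw [threshold, div_eq_mul_inv, inv_exp_two_mul_sub_one (by positivity),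
      show (2 : ℝ) - 1 = 1 by norm_num, rpow_one, div_inv_eq_mul, inv_inv]
    ring
  have ht₁ : 0 < t + 1 := by positivity
  have hanti : langevin t⁻¹ / t⁻¹ ≤ langevin (t + 1)⁻¹ / (t + 1)⁻¹ :=
    antitoneOn_langevin_div (inv_pos.2 ht₁) (inv_pos.2 ht) (by gcongr; linarith)
  rw [hthreshold ht, hthreshold ht₁]
  linarith

lemma threshold_add_rpow_le_threshold_add_one (hγ : 2 ≤ γ) (ht : 0 < t) :
    threshold γ t + t ^ (γ - 1) ≤ threshold γ (t + 1) := by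
  have hγ₀ : 0 < γ := by linarith
  have htwo := threshold_two_add_le_threshold_two_add_one ht
  rw [show threshold 2 t + t = threshold 2 t + t ^ ((2 : ℝ) - 1) by norm_num,
    threshold_add_rpow_le_threshold_add_one_iff two_pos ht, div_self two_ne_zero, one_mul] at htwo
  rw [threshold_add_rpow_le_threshold_add_one_iff hγ₀ ht]
  calc γ / 2 * (1 / t + 1 / (t + 1) - 2 * (log (t + 1) - log t))
      ≤ γ / 2 * (logSinhc (1 / t) - logSinhc (1 / (t + 1))) := by gcongr
    _ ≤ logSinhc (γ / 2 * (1 / t)) - logSinhc (γ / 2 * (1 / (t + 1))) :=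
        mul_logSinhc_sub_le (by linarith) (by positivity) (by gcongr; linarith)
    _ = logSinhc (γ / 2 / t) - logSinhc (γ / 2 / (t + 1)) := by simp only [mul_one_div]

lemma sum_rpow_lt_threshold_of_le_one (hγ₀ : 0 < γ) (hγ₁ : γ ≤ 1) (m : ℕ) :
    ∑ k ∈ Finset.Icc 1 m, (k : ℝ) ^ (γ - 1) < threshold γ (m + 1) := by
  have hstep (k : ℕ) :
      ((k + 1 : ℕ) : ℝ) ^ (γ - 1) ≤ ((k + 1 : ℕ) : ℝ) ^ γ / γ - (k : ℝ) ^ γ / γ := by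
    have htangent : (k : ℝ) ^ γ ≤ (k + 1) ^ γ + γ * (k + 1) ^ (γ - 1) * (k - (k + 1)) :=
      rpow_le_rpow_add_mul_sub hγ₀.le hγ₁ (by positivity) (by positivity)
    rw [← sub_div, le_div_iff₀ hγ₀]
    push_cast
    linarith
  calc ∑ k ∈ Finset.Icc 1 m, (k : ℝ) ^ (γ - 1)
      ≤ (m : ℝ) ^ γ / γ - ((0 : ℕ) : ℝ) ^ γ / γ :=
        sum_Icc_one_le_sub (f := fun k ↦ (k : ℝ) ^ γ / γ) hstep m
    _ = ((m + 1 : ℝ) - 1) ^ γ / γ := by simp [zero_rpow hγ₀.ne']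
    _ < threshold γ (m + 1) := sub_one_rpow_div_lt_threshold hγ₀ (by simp)

lemma sum_rpow_lt_threshold_of_one_le_of_le_two (hγ₁ : 1 ≤ γ) (hγ₂ : γ ≤ 2) (m : ℕ) :
    ∑ k ∈ Finset.Icc 1 m, (k : ℝ) ^ (γ - 1) < threshold γ (m + 1) := by
  have hγ₀ : 0 < γ := by linarith
  let f (k : ℕ) : ℝ := (k + 1 : ℝ) ^ γ / γ - (k + 1 : ℝ) ^ (γ - 1) / 2
  have hstep (k : ℕ) : ((k + 1 : ℕ) : ℝ) ^ (γ - 1) ≤ f (k + 1) - f k := by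
    have htrapezoid := trapezoid_rpow_le_rpow_sub_rpow hγ₁ hγ₂ (x := k + 1) (y := k + 1 + 1)
      (by positivity) (by simp)
    rw [add_sub_cancel_left, mul_one, mul_div_assoc, ← le_div_iff₀' hγ₀, sub_div] at htrapezoid
    simp only [f]
    push_cast
    linarith
  have hf₀ : 0 ≤ f 0 := by
    have : 1 / 2 ≤ 1 / γ := by gcongr
    simpa [f] using this
  calc ∑ k ∈ Finset.Icc 1 m, (k : ℝ) ^ (γ - 1) ≤ f m - f 0 := sum_Icc_one_le_sub hstep m
    _ ≤ f m := sub_le_self _ hf₀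
    _ < threshold γ (m + 1) := rpow_div_sub_half_lt_threshold hγ₀ (by positivity)

lemma sum_rpow_lt_threshold_of_two_le (hγ : 2 ≤ γ) (m : ℕ) :
    ∑ k ∈ Finset.Icc 1 m, (k : ℝ) ^ (γ - 1) < threshold γ (m + 1) := by
  have hstep (k : ℕ) :
      ((k + 1 : ℕ) : ℝ) ^ (γ - 1) ≤ threshold γ ((k + 1 : ℕ) + 1) - threshold γ (k + 1) := by
    have := threshold_add_rpow_le_threshold_add_one hγ (t := k + 1) (by positivity)
    push_cast
    linarith
  calc ∑ k ∈ Finset.Icc 1 m, (k : ℝ) ^ (γ - 1)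
      ≤ threshold γ (m + 1) - threshold γ ((0 : ℕ) + 1) :=
        sum_Icc_one_le_sub (f := fun k ↦ threshold γ (k + 1)) hstep m
    _ < threshold γ (m + 1) := sub_lt_self _ (threshold_pos (by linarith) (by positivity))

lemma sum_rpow_lt_threshold (hγ : 0 < γ) (m : ℕ) :
    ∑ k ∈ Finset.Icc 1 m, (k : ℝ) ^ (γ - 1) < threshold γ (m + 1) := by
  rcases le_total γ 1 with h₁ | h₁
  · exact sum_rpow_lt_threshold_of_le_one hγ h₁ m
  rcases le_total γ 2 with h₂ | h₂
  · exact sum_rpow_lt_threshold_of_one_le_of_le_two h₁ h₂ m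
  · exact sum_rpow_lt_threshold_of_two_le h₂ m

end Threshold

/-- Proposition 4.1 (iii): for any real `γ` and `S_n = ∑_{k=1}^n k^{γ-1}`, one has
`S_n > exp(γ/n) · S_{n-1}` for all `n ≥ 2`. -/
theorem stmt_9 (γ : ℝ)
    (S : ℕ → ℝ) (hS : ∀ n, S n = ∑ k ∈ Finset.Icc 1 n, (k : ℝ) ^ (γ - 1)) :
    ∀ n : ℕ, 2 ≤ n → S n > Real.exp (γ / (n : ℝ)) * S (n - 1) := by
  intro n hn
  obtain ⟨m, rfl⟩ : ∃ m, n = m + 1 := ⟨n - 1, by lia⟩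
  have hrec : S (m + 1) = S m + (m + 1 : ℝ) ^ (γ - 1) := by
    rw [hS, hS, Finset.sum_Icc_succ_top (by lia), Nat.cast_succ]
  rw [Nat.add_sub_cancel, hrec, Nat.cast_succ, gt_iff_lt]
  rcases le_or_gt γ 0 with hγ | hγ
  · have hexp : exp (γ / (m + 1)) ≤ 1 :=
      exp_le_one_iff.2 (div_nonpos_of_nonpos_of_nonneg hγ (by positivity))
    have hsum : 0 ≤ S m := by rw [hS]; positivity
    calc exp (γ / (m + 1)) * S m ≤ S m := mul_le_of_le_one_left hsum hexp
      _ < S m + (m + 1 : ℝ) ^ (γ - 1) := lt_add_of_pos_right _ (by positivity)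
  · rw [exp_mul_lt_add_rpow_iff hγ (by positivity), hS]
    exact sum_rpow_lt_threshold hγ m
end

section
/- Define F(x, γ) = (1+x)^{γ-1} (1 - exp(-γ x)) - exp(γ x / (1+x)) + 1 for x ∈ [0,1] and γ ≥ 2. Then for every positive integer n and every real γ ≥ 2, F(1/n, γ) ≥ 0. -/
/-!
Let `K s = log ((exp s - 1) / s)`, which is convex. For `x, γ > 0` the claim is equivalent to
`γ * (x - log (1 + x)) ≤ K (γ * x) - K (γ * x / (1 + x))`. Scaling both endpoints of a secant of a
convex function up from the origin does not decrease its slope, so if this inequality holds for one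
`γ₀ > 0` it holds for every `γ ≥ γ₀`. At `γ₀ = 2` the claim reads `1 ≤ G x`, where
`G x = (2 + x - (1 + x) * exp (-(2 * x))) * exp (-(2 * x / (1 + x)))` satisfies `G 0 = 1`. Up to a
positive factor, the derivative of `G` is
`(1 + x) * (3 + 3 * x + 2 * x ^ 2) * exp (-(2 * x)) - (3 - x ^ 2)`, which vanishes at `0` and has
derivative `2 * x * (1 - (1 + 2 * x + 2 * x ^ 2) * exp (-(2 * x))) ≥ 0`.
-/

open Real Set

theorem convexOn_mul_sub_le_sub_mul {𝕜 : Type*} [Field 𝕜] [LinearOrder 𝕜] [IsStrictOrderedRing 𝕜]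
    {s : Set 𝕜} {f : 𝕜 → 𝕜} (hf : ConvexOn 𝕜 s f) {a b c : 𝕜} (has : a ∈ s) (hcbs : c * b ∈ s)
    (ha : 0 ≤ a) (hab : a ≤ b) (hc : 1 ≤ c) :
    c * (f b - f a) ≤ f (c * b) - f (c * a) := by
  obtain rfl | hab := hab.eq_or_lt
  · simp
  have hc0 : 0 < c := one_pos.trans_le hc
  have ha_ca : a ≤ c * a := le_mul_of_one_le_left ha hc
  have hb_cb : b ≤ c * b := le_mul_of_one_le_left (ha.trans hab.le) hc
  have hca_cb : c * a < c * b := mul_lt_mul_of_pos_left hab hc0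
  have ha_cb : a < c * b := hab.trans_le hb_cb
  have mem_s {t : 𝕜} (h₁ : a ≤ t) (h₂ : t ≤ c * b) : t ∈ s :=
    hf.1.ordConnected.out has hcbs ⟨h₁, h₂⟩
  have slope_le : (f b - f a) / (b - a) ≤ (f (c * b) - f (c * a)) / (c * b - c * a) :=
    calc (f b - f a) / (b - a)
        ≤ (f (c * b) - f a) / (c * b - a) :=
          hf.secant_mono has (mem_s hab.le hb_cb) hcbs hab.ne' ha_cb.ne' hb_cb
      _ = (f a - f (c * b)) / (a - c * b) := by rw [← neg_div_neg_eq, neg_sub, neg_sub]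
      _ ≤ (f (c * a) - f (c * b)) / (c * a - c * b) :=
          hf.secant_mono hcbs has (mem_s ha_ca hca_cb.le) ha_cb.ne hca_cb.ne ha_ca
      _ = (f (c * b) - f (c * a)) / (c * b - c * a) := by rw [← neg_div_neg_eq, neg_sub, neg_sub]
  rw [← mul_sub, div_le_div_iff₀ (sub_pos.2 hab) (mul_pos hc0 (sub_pos.2 hab))] at slope_le
  refine le_of_mul_le_mul_right ?_ (sub_pos.2 hab)
  linarith

/-- The cumulant generating function `log ∫ u in 0..1, exp (s * u)` of the uniform distribution on
`[0, 1]`, in closed form. The value at `s = 0` is the correct one, `0`, because `0 / 0 = 0` and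
`log 0 = 0`. It carries the dependence on `γ` in the main inequality. -/
noncomputable def uniformCGF (s : ℝ) : ℝ := log ((exp s - 1) / s)

theorem log_exp_sub_one {s : ℝ} (hs : 0 < s) : log (exp s - 1) = uniformCGF s + log s := by
  have : 0 < exp s - 1 := sub_pos.2 (one_lt_exp_iff.2 hs)
  rw [uniformCGF, log_div this.ne' hs.ne', sub_add_cancel]

theorem sq_mul_exp_le_sq_exp_sub_one {s : ℝ} (hs : 0 ≤ s) : s ^ 2 * exp s ≤ (exp s - 1) ^ 2 := by
  have exp_half_sq : exp (s / 2) ^ 2 = exp s := by rw [← exp_nat_mul]; congr 1; push_cast; ring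
  have le_sinh : s / 2 ≤ sinh (s / 2) := self_le_sinh_iff.2 (by positivity)
  have mul_exp_half_le : s * exp (s / 2) ≤ exp s - 1 :=
    calc s * exp (s / 2) ≤ 2 * sinh (s / 2) * exp (s / 2) := by gcongr; linarith
      _ = exp (s / 2) ^ 2 - exp (-(s / 2)) * exp (s / 2) := by rw [sinh_eq]; ring
      _ = exp s - 1 := by rw [exp_half_sq, ← exp_add, neg_add_cancel, exp_zero]
  calc s ^ 2 * exp s = (s * exp (s / 2)) ^ 2 := by rw [mul_pow, exp_half_sq]
    _ ≤ (exp s - 1) ^ 2 := by gcongr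

theorem hasDerivAt_uniformCGF {s : ℝ} (hs : 0 < s) :
    HasDerivAt uniformCGF (exp s / (exp s - 1) - 1 / s) s := by
  have hexp : exp s - 1 ≠ 0 := (sub_pos.2 (one_lt_exp_iff.2 hs)).ne'
  refine ((((hasDerivAt_exp s).sub_const 1).log hexp).sub
    ((hasDerivAt_id s).log hs.ne')).congr_of_eventuallyEq ?_
  filter_upwards [Ioi_mem_nhds hs] with t ht
  exact eq_sub_of_add_eq (log_exp_sub_one ht).symm

theorem convexOn_uniformCGF : ConvexOn ℝ (Ioi 0) uniformCGF := by
  refine convexOn_of_hasDerivWithinAt2_nonneg (convex_Ioi 0)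
    (f' := fun s ↦ exp s / (exp s - 1) - 1 / s)
    (f'' := fun s ↦ 1 / s ^ 2 - exp s / (exp s - 1) ^ 2)
    (fun s hs ↦ (hasDerivAt_uniformCGF hs).continuousAt.continuousWithinAt) ?_ ?_ ?_ <;>
  rw [interior_Ioi] <;> intro s (hs : 0 < s)
  · exact (hasDerivAt_uniformCGF hs).hasDerivWithinAt
  all_goals have hexp : 0 < exp s - 1 := sub_pos.2 (one_lt_exp_iff.2 hs)
  · refine HasDerivAt.hasDerivWithinAt ?_
    convert! ((hasDerivAt_exp s).div ((hasDerivAt_exp s).sub_const 1) hexp.ne').sub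
      ((hasDerivAt_const s (1 : ℝ)).div (hasDerivAt_id s) hs.ne') using 1
    simp only [id_eq]
    ring
  · rw [sub_nonneg, div_le_div_iff₀ (by positivity) (by positivity), one_mul, mul_comm]
    exact sq_mul_exp_le_sq_exp_sub_one hs.le

section DependenceOnExponent

variable {x γ : ℝ}

theorem exp_le_rpow_mul_add_one_iff (hx : 0 < x) (hγ : 0 < γ) :
    exp (γ * x / (1 + x)) ≤ (1 + x) ^ (γ - 1) * (1 - exp (-(γ * x))) + 1 ↔
      γ * (x - log (1 + x)) ≤ uniformCGF (γ * x) - uniformCGF (γ * x / (1 + x)) := by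
  have h1x : 0 < 1 + x := by positivity
  have hA : 0 < γ * x := by positivity
  have hB : 0 < γ * x / (1 + x) := by positivity
  have hexpA : 0 < exp (γ * x) - 1 := sub_pos.2 (one_lt_exp_iff.2 hA)
  have hexpB : 0 < exp (γ * x / (1 + x)) - 1 := sub_pos.2 (one_lt_exp_iff.2 hB)
  have one_sub_exp_neg : 1 - exp (-(γ * x)) = exp (-(γ * x)) * (exp (γ * x) - 1) := by
    rw [mul_sub, ← exp_add, neg_add_cancel, exp_zero, mul_one]
  have log_lhs : log (exp (γ * x / (1 + x)) - 1) =
      uniformCGF (γ * x / (1 + x)) + (log (γ * x) - log (1 + x)) := by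
    rw [log_exp_sub_one hB, log_div hA.ne' h1x.ne']
  have log_rhs : log ((1 + x) ^ (γ - 1) * (exp (-(γ * x)) * (exp (γ * x) - 1))) =
      (γ - 1) * log (1 + x) + (-(γ * x) + (uniformCGF (γ * x) + log (γ * x))) := by
    rw [log_mul (by positivity) (by positivity), log_mul (by positivity) hexpA.ne',
      log_rpow h1x, log_exp, log_exp_sub_one hA]
  rw [← sub_le_iff_le_add, one_sub_exp_neg, ← log_le_log_iff hexpB (by positivity), log_lhs,
    log_rhs, ← sub_nonneg, ← sub_nonneg (b := γ * (x - log (1 + x)))]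
  ring_nf

theorem exp_le_rpow_mul_add_one_of_le {γ₀ : ℝ} (hx : 0 < x) (hγ₀ : 0 < γ₀) (hγ : γ₀ ≤ γ)
    (h : exp (γ₀ * x / (1 + x)) ≤ (1 + x) ^ (γ₀ - 1) * (1 - exp (-(γ₀ * x))) + 1) :
    exp (γ * x / (1 + x)) ≤ (1 + x) ^ (γ - 1) * (1 - exp (-(γ * x))) + 1 := by
  rw [exp_le_rpow_mul_add_one_iff hx hγ₀] at h
  rw [exp_le_rpow_mul_add_one_iff hx (hγ₀.trans_le hγ)]
  have hc : 1 ≤ γ / γ₀ := (one_le_div hγ₀).2 hγ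
  have scale (t : ℝ) : γ / γ₀ * (γ₀ * t) = γ * t := by field_simp
  have hγx : 0 < γ / γ₀ * (γ₀ * x) := by positivity
  have hdiv : γ₀ * (x / (1 + x)) ≤ γ₀ * x := by
    gcongr
    exact div_le_self hx.le (by linarith)
  simp only [mul_div_assoc] at h ⊢
  calc γ * (x - log (1 + x)) = γ / γ₀ * (γ₀ * (x - log (1 + x))) := (scale _).symm
    _ ≤ γ / γ₀ * (uniformCGF (γ₀ * x) - uniformCGF (γ₀ * (x / (1 + x)))) := by gcongr
    _ ≤ uniformCGF (γ / γ₀ * (γ₀ * x)) - uniformCGF (γ / γ₀ * (γ₀ * (x / (1 + x)))) :=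
      convexOn_mul_sub_le_sub_mul convexOn_uniformCGF (mem_Ioi.2 (by positivity)) hγx
        (by positivity) hdiv hc
    _ = uniformCGF (γ * x) - uniformCGF (γ * (x / (1 + x))) := by rw [scale, scale]

end DependenceOnExponent

section ExponentTwo

variable {x : ℝ}

theorem hasDerivAt_exp_neg_two_mul (x : ℝ) :
    HasDerivAt (fun t ↦ exp (-(2 * t))) (-2 * exp (-(2 * x))) x := by
  simpa [mul_comm] using (((hasDerivAt_id x).const_mul 2).neg).exp

theorem three_sub_sq_le_mul_exp_neg (hx : 0 ≤ x) :
    3 - x ^ 2 ≤ (1 + x) * (3 + 3 * x + 2 * x ^ 2) * exp (-(2 * x)) := by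
  let P : ℝ → ℝ := fun t ↦ (3 + 6 * t + 5 * t ^ 2 + 2 * t ^ 3) * exp (-(2 * t)) + t ^ 2
  have hP (t : ℝ) : HasDerivAt P (2 * t * (1 - (1 + 2 * t + 2 * t ^ 2) * exp (-(2 * t)))) t := by
    have hpoly : HasDerivAt (fun t : ℝ ↦ 3 + 6 * t + 5 * t ^ 2 + 2 * t ^ 3)
        (6 + 10 * t + 6 * t ^ 2) t := by
      convert! ((((hasDerivAt_id t).const_mul 6).const_add 3).add
        ((hasDerivAt_pow 2 t).const_mul 5)).add ((hasDerivAt_pow 3 t).const_mul 2) using 1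
      norm_num
      ring
    convert! (hpoly.mul (hasDerivAt_exp_neg_two_mul t)).add (hasDerivAt_pow 2 t) using 1
    norm_num
    ring
  have monotoneOn_P : MonotoneOn P (Ici 0) := by
    refine monotoneOn_of_hasDerivWithinAt_nonneg (convex_Ici 0)
      (fun t _ ↦ (hP t).continuousAt.continuousWithinAt) (fun t _ ↦ (hP t).hasDerivWithinAt) ?_
    rw [interior_Ici]
    intro t (ht : 0 < t)
    have quadratic_le : 1 + 2 * t + 2 * t ^ 2 ≤ exp (2 * t) :=
      calc 1 + 2 * t + 2 * t ^ 2 = 1 + 2 * t + (2 * t) ^ 2 / 2 := by ring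
        _ ≤ exp (2 * t) := quadratic_le_exp_of_nonneg (by positivity)
    have : (1 + 2 * t + 2 * t ^ 2) * exp (-(2 * t)) ≤ 1 := by
      rwa [exp_neg, mul_inv_le_iff₀ (exp_pos _), one_mul]
    exact mul_nonneg (by positivity) (sub_nonneg.2 this)
  have hP0 : P 0 = 3 := by simp [P]
  have le_P : 3 ≤ P x := hP0 ▸ monotoneOn_P self_mem_Ici hx hx
  simp only [P] at le_P
  linarith

theorem exp_two_mul_div_one_add_le (hx : 0 ≤ x) :
    exp (2 * x / (1 + x)) ≤ (1 + x) * (1 - exp (-(2 * x))) + 1 := by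
  let G : ℝ → ℝ := fun t ↦ ((1 + t) * (1 - exp (-(2 * t))) + 1) * exp (-(2 * t / (1 + t)))
  let G' : ℝ → ℝ := fun t ↦ exp (-(2 * t / (1 + t))) / (1 + t) ^ 2 *
    ((1 + t) * (3 + 3 * t + 2 * t ^ 2) * exp (-(2 * t)) - (3 - t ^ 2))
  have hG {t : ℝ} (ht : 0 ≤ t) : HasDerivAt G (G' t) t := by
    have h1t : 1 + t ≠ 0 := by positivity
    have hlin : HasDerivAt (fun t : ℝ ↦ 1 + t) 1 t := (hasDerivAt_id t).const_add 1
    have hfactor := (hlin.mul ((hasDerivAt_exp_neg_two_mul t).const_sub 1)).add_const 1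
    have hexp := ((((hasDerivAt_id t).const_mul 2).div hlin h1t).neg).exp
    convert! hfactor.mul hexp using 1
    simp only [G', id_eq, Pi.mul_apply, Pi.div_apply, Pi.neg_apply]
    field_simp
    ring
  have monotoneOn_G : MonotoneOn G (Ici 0) := by
    refine monotoneOn_of_hasDerivWithinAt_nonneg (convex_Ici 0)
      (fun t ht ↦ (hG ht).continuousAt.continuousWithinAt)
      (fun t ht ↦ (hG (interior_subset ht)).hasDerivWithinAt) fun t ht ↦ ?_
    exact mul_nonneg (by positivity)
      (sub_nonneg.2 (three_sub_sq_le_mul_exp_neg (interior_subset ht)))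
  have hG0 : G 0 = 1 := by simp [G]
  have one_le_G : 1 ≤ G x := hG0 ▸ monotoneOn_G self_mem_Ici hx hx
  simp only [G] at one_le_G
  rwa [exp_neg (2 * x / (1 + x)), le_mul_inv_iff₀ (exp_pos _), one_mul] at one_le_G

end ExponentTwo

theorem stmt_10_general {x γ : ℝ} (hx : 0 ≤ x) (hγ : 2 ≤ γ) :
    0 ≤ (1 + x) ^ (γ - 1) * (1 - exp (-(γ * x))) - exp (γ * x / (1 + x)) + 1 := by
  obtain rfl | hx := hx.eq_or_lt
  · simp
  have base : exp (2 * x / (1 + x)) ≤ (1 + x) ^ ((2 : ℝ) - 1) * (1 - exp (-(2 * x))) + 1 := by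
    rw [show (2 : ℝ) - 1 = 1 by norm_num, rpow_one]
    exact exp_two_mul_div_one_add_le hx.le
  linarith [exp_le_rpow_mul_add_one_of_le hx two_pos hγ base]

/-- Lemma 4.2: with `F(x,γ) = (1+x)^{γ-1}(1 - exp(-γx)) - exp(γx/(1+x)) + 1`,
one has `F(1/n, γ) ≥ 0` for every positive integer `n` and every `γ ≥ 2`. -/
theorem stmt_10 (F : ℝ → ℝ → ℝ)
    (hF : ∀ x γ : ℝ, F x γ =
      (1 + x) ^ (γ - 1) * (1 - Real.exp (-(γ * x))) - Real.exp (γ * x / (1 + x)) + 1) :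
    ∀ n : ℕ, 1 ≤ n → ∀ γ : ℝ, 2 ≤ γ → 0 ≤ F (1 / (n : ℝ)) γ := by
  intro n _ γ hγ
  exact hF _ γ ▸ stmt_10_general (by positivity) hγ
end

section
/- Let p > 1 and α > p - 1 be real numbers, and for each positive integer n let S_n = ∑_{k=1}^n k^{α-p}. Then for every integer n ≥ 2, S_{n-1}^{-1/(p-1)} - S_n^{-1/(p-1)} ≥ ( (α-p+1)^{p/(p-1)} / ((p-1) n^{α/(p-1)}) ) · ∑_{k=0}^∞ (α-p+1)^{2k} / ( 2^{2k} (p-1)^{2k} (2k+1)! · n^{2k} ). -/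
/-!
Put `a = α - p + 1`, `q = 1 / (p - 1)` and `S m = ∑ k ≤ m, k ^ (a - 1)`. The series sums to
`sinh z / z` with `z = q * (a / n) / 2`, so the right-hand side is
`(n ^ a / a) ^ (-q) * (2 * sinh z)`. With `s = S (n - 1)`, `y = a / n` and `M = n ^ a / a` one has
`S n = s + y * M`, and everything reduces to the growth bound `S n ≥ s * exp y`. Indeed the latter
gives `y * M ≥ s * (exp y - 1)`, hence `M ≥ s * exp (y / 2)` because `2 * sinh (y / 2) ≥ y`, and
therefore `s ^ (-q) - S n ^ (-q) ≥ s ^ (-q) - (s * exp y) ^ (-q)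
= (s * exp (y / 2)) ^ (-q) * (2 * sinh z) ≥ M ^ (-q) * (2 * sinh z)`.

For `a ≤ 1` or `a ≥ 2` the growth bound follows by comparing `k ^ (a - 1)` with the increments
`(k + 1/2) ^ a - (k - 1/2) ^ a`: their ratio increases with `k` because
`t ↦ (1 + t) ^ a - (1 - t) ^ a` is convex on `[0, 1]`. For `1 ≤ a ≤ 2` the function
`t ↦ t ^ (a - 1)` is concave, and the trapezoidal rule gives `s ≤ n ^ a / a - n ^ (a - 1) / 2`.
Both cases conclude with `exp u * (2 - u) ≤ 2 + u`, the trapezoidal rule for the convex function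
`exp`.
-/

section

open Real Set MeasureTheory

lemma integral_le_trapezoid_of_convexOn {f : ℝ → ℝ} {x y : ℝ} (hxy : x ≤ y)
    (hf : ConvexOn ℝ (Icc x y) f) (hint : IntervalIntegrable f volume x y) :
    ∫ t in x..y, f t ≤ (y - x) * ((f x + f y) / 2) := by
  have hpair : ∀ t ∈ Icc x y, f t + f (x + y - t) ≤ f x + f y := by
    intro t ht
    rw [← segment_eq_Icc hxy] at ht
    obtain ⟨u, v, hu, hv, huv, rfl⟩ := ht
    have hleft := hf.2 (left_mem_Icc.2 hxy) (right_mem_Icc.2 hxy) hu hv huv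
    have hright := hf.2 (left_mem_Icc.2 hxy) (right_mem_Icc.2 hxy) hv hu (by rwa [add_comm])
    have hreflect : x + y - (u • x + v • y) = v • x + u • y := by
      simp only [smul_eq_mul]
      linear_combination (-x - y) * huv
    rw [hreflect]
    simp only [smul_eq_mul] at hleft hright ⊢
    linear_combination hleft + hright + (f x + f y) * huv
  have hint' : IntervalIntegrable (fun t ↦ f (x + y - t)) volume x y := by
    simpa using (hint.comp_sub_left (x + y)).symm
  have hmono :=
    intervalIntegral.integral_mono_on hxy (hint.add hint') intervalIntegrable_const hpair
  have hsymm : ∫ t in x..y, f (x + y - t) = ∫ t in x..y, f t := by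
    simp [intervalIntegral.integral_comp_sub_left f (x + y)]
  rw [intervalIntegral.integral_add hint hint', hsymm, intervalIntegral.integral_const,
    smul_eq_mul] at hmono
  linarith

lemma exp_mul_two_sub_le_two_add {u : ℝ} (hu : 0 ≤ u) : exp u * (2 - u) ≤ 2 + u := by
  have htrap := integral_le_trapezoid_of_convexOn hu
    (convexOn_exp.subset (subset_univ _) (convex_Icc 0 u)) intervalIntegral.intervalIntegrable_exp
  rw [integral_exp, exp_zero] at htrap
  linarith

lemma trapezoid_rpow_le {a x y : ℝ} (ha₁ : 1 ≤ a) (ha₂ : a ≤ 2) (hx : 0 ≤ x) (hxy : x ≤ y) :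
    (y - x) * ((x ^ (a - 1) + y ^ (a - 1)) / 2) ≤ (y ^ a - x ^ a) / a := by
  have hconv : ConvexOn ℝ (Icc x y) fun t ↦ -t ^ (a - 1) :=
    ((concaveOn_rpow (by linarith) (by linarith)).neg).subset
      (fun t ht ↦ hx.trans ht.1) (convex_Icc x y)
  have htrap := integral_le_trapezoid_of_convexOn hxy hconv
    (intervalIntegral.intervalIntegrable_rpow' (by linarith)).neg
  rw [intervalIntegral.integral_neg, integral_rpow (Or.inl (by linarith)), sub_add_cancel] at htrap
  linarith

lemma sum_rpow_le_rpow_div_sub {a : ℝ} (ha₁ : 1 ≤ a) (ha₂ : a ≤ 2) (m : ℕ) :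
    ∑ k ∈ Finset.Icc 1 m, (k : ℝ) ^ (a - 1) ≤
      ((m : ℝ) + 1) ^ a / a - ((m : ℝ) + 1) ^ (a - 1) / 2 := by
  induction m with
  | zero => simpa using inv_anti₀ (by linarith) ha₂
  | succ m ih =>
    have htrap := trapezoid_rpow_le ha₁ ha₂ (x := (m : ℝ) + 1) (y := (m : ℝ) + 1 + 1)
      (by positivity) (by linarith)
    rw [add_sub_cancel_left, one_mul, sub_div] at htrap
    rw [Finset.sum_Icc_succ_top (by omega)]
    push_cast
    linarith

lemma convexOn_one_add_rpow_sub_one_sub_rpow {a : ℝ} (ha : 0 ≤ a) (ha' : a ≤ 1 ∨ 2 ≤ a) :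
    ConvexOn ℝ (Icc 0 1) fun t : ℝ ↦ (1 + t) ^ a - (1 - t) ^ a := by
  have hderiv_add (b : ℝ) {t : ℝ} (ht : t ∈ Ioo (0 : ℝ) 1) :
      HasDerivAt (fun t : ℝ ↦ (1 + t) ^ b) (b * (1 + t) ^ (b - 1)) t := by
    simpa using ((hasDerivAt_id t).const_add 1).rpow_const (p := b)
      (Or.inl (by simp only [id]; linarith [ht.1]))
  have hderiv_sub (b : ℝ) {t : ℝ} (ht : t ∈ Ioo (0 : ℝ) 1) :
      HasDerivAt (fun t : ℝ ↦ (1 - t) ^ b) (-(b * (1 - t) ^ (b - 1))) t := by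
    simpa using ((hasDerivAt_id t).const_sub 1).rpow_const (p := b)
      (Or.inl (by simp only [id]; linarith [ht.2]))
  refine convexOn_of_hasDerivWithinAt2_nonneg (convex_Icc 0 1)
    (f' := fun t ↦ a * ((1 + t) ^ (a - 1) + (1 - t) ^ (a - 1)))
    (f'' := fun t ↦ a * ((a - 1) * ((1 + t) ^ (a - 1 - 1) - (1 - t) ^ (a - 1 - 1)))) ?_ ?_ ?_ ?_
  · exact (ContinuousOn.rpow_const (by fun_prop) fun _ _ ↦ Or.inr ha).sub
      (ContinuousOn.rpow_const (by fun_prop) fun _ _ ↦ Or.inr ha)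
  all_goals
    rw [interior_Icc]
    intro t ht
  · exact (((hderiv_add a ht).sub (hderiv_sub a ht)).congr_deriv (by ring)).hasDerivWithinAt
  · exact ((((hderiv_add (a - 1) ht).add (hderiv_sub (a - 1) ht)).const_mul a).congr_deriv
      (by ring)).hasDerivWithinAt
  · refine mul_nonneg ha ?_
    have hle : 1 - t ≤ 1 + t := by linarith [ht.1]
    rcases ha' with ha' | ha'
    · exact mul_nonneg_of_nonpos_of_nonpos (by linarith)
        (sub_nonpos.2 (rpow_le_rpow_of_nonpos (by linarith [ht.2]) hle (by linarith)))
    · exact mul_nonneg (by linarith)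
        (sub_nonneg.2 (rpow_le_rpow (by linarith [ht.2]) hle (by linarith)))

lemma antitoneOn_rpow_central_diff_div {a h : ℝ} (ha : 0 ≤ a) (ha' : a ≤ 1 ∨ 2 ≤ a) (hh : 0 < h) :
    AntitoneOn (fun x : ℝ ↦ ((x + h) ^ a - (x - h) ^ a) / x ^ (a - 1)) (Ici h) := by
  set φ : ℝ → ℝ := fun t ↦ (1 + t) ^ a - (1 - t) ^ a with hφ
  have hhomog {x : ℝ} (hx : h ≤ x) :
      ((x + h) ^ a - (x - h) ^ a) / x ^ (a - 1) = h * ((φ (h / x) - φ 0) / (h / x - 0)) := by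
    have hx₀ : 0 < x := hh.trans_le hx
    have hadd : x + h = x * (1 + h / x) := by field_simp
    have hsub : x - h = x * (1 - h / x) := by field_simp
    rw [hadd, hsub, mul_rpow hx₀.le (by positivity),
      mul_rpow hx₀.le (sub_nonneg.2 ((div_le_one hx₀).2 hx)), rpow_sub_one hx₀.ne']
    simp only [hφ, add_zero, sub_zero, sub_self]
    field_simp
  have hmem {x : ℝ} (hx : h ≤ x) : h / x ∈ Icc (0 : ℝ) 1 :=
    ⟨by have := hh.trans_le hx; positivity, (div_le_one (hh.trans_le hx)).2 hx⟩
  intro x hx y hy hxy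
  have hx₀ : 0 < x := hh.trans_le hx
  have hy₀ : 0 < y := hh.trans_le hy
  simp only [hhomog hx, hhomog hy]
  gcongr h * ?_
  exact (convexOn_one_add_rpow_sub_one_sub_rpow ha ha').secant_mono (left_mem_Icc.2 zero_le_one)
    (hmem hy) (hmem hx) (by positivity) (by positivity) (by gcongr)

lemma sum_rpow_mul_central_diff_le {a : ℝ} (ha : 0 ≤ a) (ha' : a ≤ 1 ∨ 2 ≤ a) (m : ℕ) :
    (∑ k ∈ Finset.Icc 1 m, (k : ℝ) ^ (a - 1)) *
        (((m : ℝ) + 1 + 1 / 2) ^ a - ((m : ℝ) + 1 - 1 / 2) ^ a) ≤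
      ((m : ℝ) + 1) ^ (a - 1) * ((m : ℝ) + 1 - 1 / 2) ^ a := by
  set D : ℝ → ℝ := fun x ↦ (x + 1 / 2) ^ a - (x - 1 / 2) ^ a
  have hcompare : ∀ k ∈ Finset.Icc 1 m,
      (k : ℝ) ^ (a - 1) * D (m + 1) ≤ ((m : ℝ) + 1) ^ (a - 1) * D k := by
    intro k hk
    have hk₁ : (1 : ℝ) ≤ k := by exact_mod_cast (Finset.mem_Icc.1 hk).1
    have hkm : (k : ℝ) ≤ m := by exact_mod_cast (Finset.mem_Icc.1 hk).2
    have hanti := antitoneOn_rpow_central_diff_div ha ha' (one_half_pos (α := ℝ))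
      (show (k : ℝ) ∈ Ici (1 / 2) by rw [mem_Ici]; linarith)
      (show (m : ℝ) + 1 ∈ Ici (1 / 2) by rw [mem_Ici]; linarith) (by linarith)
    have := (div_le_div_iff₀ (by positivity) (by positivity)).1 hanti
    linarith
  have htelescope : ∑ k ∈ Finset.Icc 1 m, D k = ((m : ℝ) + 1 - 1 / 2) ^ a - (1 / 2) ^ a := by
    have hsum := Finset.sum_Ico_sub (fun k : ℕ ↦ ((k : ℝ) - 1 / 2) ^ a) (Nat.le_add_left 1 m)
    push_cast at hsum
    rw [Finset.Ico_add_one_right_eq_Icc] at hsum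
    convert hsum using 4 <;> ring
  calc (∑ k ∈ Finset.Icc 1 m, (k : ℝ) ^ (a - 1)) * D (m + 1)
      ≤ ∑ k ∈ Finset.Icc 1 m, ((m : ℝ) + 1) ^ (a - 1) * D k := by
        rw [Finset.sum_mul]; exact Finset.sum_le_sum hcompare
    _ = ((m : ℝ) + 1) ^ (a - 1) * (((m : ℝ) + 1 - 1 / 2) ^ a - (1 / 2) ^ a) := by
        rw [← Finset.mul_sum, htelescope]
    _ ≤ ((m : ℝ) + 1) ^ (a - 1) * ((m : ℝ) + 1 - 1 / 2) ^ a := by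
        gcongr
        exact sub_le_self _ (by positivity)

lemma sum_rpow_mul_exp_sub_one_le_of_le_one_or_two_le {a : ℝ} (ha : 0 ≤ a) (ha' : a ≤ 1 ∨ 2 ≤ a)
    (m : ℕ) :
    (∑ k ∈ Finset.Icc 1 m, (k : ℝ) ^ (a - 1)) * (exp (a / ((m : ℝ) + 1)) - 1) ≤
      ((m : ℝ) + 1) ^ (a - 1) := by
  have hcentral := sum_rpow_mul_central_diff_le ha ha' m
  set s := ∑ k ∈ Finset.Icc 1 m, (k : ℝ) ^ (a - 1)
  set x : ℝ := (m : ℝ) + 1 with hx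
  have hx₁ : 1 ≤ x := by simp [hx]
  have hexp : exp (a / x) * (x - 1 / 2) ^ a ≤ (x + 1 / 2) ^ a := by
    have hbase : exp (1 / x) * (x - 1 / 2) ≤ x + 1 / 2 := by
      have hpade := exp_mul_two_sub_le_two_add (u := 1 / x) (by positivity)
      calc exp (1 / x) * (x - 1 / 2) = x / 2 * (exp (1 / x) * (2 - 1 / x)) := by field_simp
        _ ≤ x / 2 * (2 + 1 / x) := by gcongr
        _ = x + 1 / 2 := by field_simp
    calc exp (a / x) * (x - 1 / 2) ^ a = (exp (1 / x) * (x - 1 / 2)) ^ a := by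
          rw [mul_rpow (exp_pos _).le (by linarith), ← exp_mul, one_div_mul_eq_div]
      _ ≤ (x + 1 / 2) ^ a :=
          rpow_le_rpow (mul_nonneg (exp_pos _).le (by linarith)) hbase ha
  refine le_of_mul_le_mul_right ?_ (rpow_pos_of_pos (by linarith : 0 < x - 1 / 2) a)
  calc s * (exp (a / x) - 1) * (x - 1 / 2) ^ a
      = s * (exp (a / x) * (x - 1 / 2) ^ a - (x - 1 / 2) ^ a) := by ring
    _ ≤ s * ((x + 1 / 2) ^ a - (x - 1 / 2) ^ a) := by gcongr
    _ ≤ x ^ (a - 1) * (x - 1 / 2) ^ a := hcentral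

lemma sum_rpow_mul_exp_sub_one_le_of_one_le_of_le_two {a : ℝ} (ha₁ : 1 ≤ a) (ha₂ : a ≤ 2) (m : ℕ) :
    (∑ k ∈ Finset.Icc 1 m, (k : ℝ) ^ (a - 1)) * (exp (a / ((m : ℝ) + 1)) - 1) ≤
      ((m : ℝ) + 1) ^ (a - 1) := by
  have htrap := sum_rpow_le_rpow_div_sub ha₁ ha₂ m
  set s := ∑ k ∈ Finset.Icc 1 m, (k : ℝ) ^ (a - 1)
  set x : ℝ := (m : ℝ) + 1
  have hx₀ : 0 < x := by positivity
  have hpade := exp_mul_two_sub_le_two_add (u := a / x) (by positivity)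
  have hexp : 0 ≤ exp (a / x) - 1 := sub_nonneg.2 (one_le_exp (by positivity))
  calc s * (exp (a / x) - 1) ≤ (x ^ a / a - x ^ (a - 1) / 2) * (exp (a / x) - 1) := by gcongr
    _ = x ^ a / (2 * a) * (exp (a / x) * (2 - a / x) - (2 - a / x)) := by
        rw [rpow_sub_one hx₀.ne']; field_simp
    _ ≤ x ^ a / (2 * a) * (2 + a / x - (2 - a / x)) := by gcongr
    _ = x ^ (a - 1) := by rw [rpow_sub_one hx₀.ne']; field_simp; ring

lemma sum_rpow_mul_exp_sub_one_le {a : ℝ} (ha : 0 ≤ a) (m : ℕ) :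
    (∑ k ∈ Finset.Icc 1 m, (k : ℝ) ^ (a - 1)) * (exp (a / ((m : ℝ) + 1)) - 1) ≤
      ((m : ℝ) + 1) ^ (a - 1) := by
  by_cases hmid : 1 ≤ a ∧ a ≤ 2
  · exact sum_rpow_mul_exp_sub_one_le_of_one_le_of_le_two hmid.1 hmid.2 m
  · exact sum_rpow_mul_exp_sub_one_le_of_le_one_or_two_le ha (by grind) m

lemma exp_sub_one_eq_exp_half_mul_two_sinh_half (y : ℝ) :
    exp y - 1 = exp (y / 2) * (2 * sinh (y / 2)) := by
  rw [sinh_eq, mul_div_cancel₀ _ two_ne_zero, mul_sub, ← exp_add, ← exp_add, add_halves,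
    add_neg_cancel, exp_zero]

lemma rpow_neg_mul_two_sinh_le {s M y q : ℝ} (hs : 0 < s) (hy : 0 < y) (hq : 0 ≤ q)
    (h : s * (exp y - 1) ≤ y * M) :
    M ^ (-q) * (2 * sinh (q * y / 2)) ≤ s ^ (-q) - (s + y * M) ^ (-q) := by
  have hM : s * exp (y / 2) ≤ M := by
    refine le_of_mul_le_mul_left ?_ hy
    calc y * (s * exp (y / 2)) ≤ 2 * sinh (y / 2) * (s * exp (y / 2)) := by
          gcongr
          linarith [self_le_sinh_iff.2 (half_pos hy).le]
      _ = s * (exp y - 1) := by rw [exp_sub_one_eq_exp_half_mul_two_sinh_half]; ring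
      _ ≤ y * M := h
  have hsinh : 0 ≤ 2 * sinh (q * y / 2) :=
    mul_nonneg zero_le_two (sinh_nonneg_iff.2 (by positivity))
  calc M ^ (-q) * (2 * sinh (q * y / 2))
      ≤ (s * exp (y / 2)) ^ (-q) * (2 * sinh (q * y / 2)) :=
        mul_le_mul_of_nonneg_right
          (rpow_le_rpow_of_nonpos (by positivity) hM (neg_nonpos.2 hq)) hsinh
    _ = s ^ (-q) * (exp (-(q * y) / 2) * (2 * sinh (q * y / 2))) := by
        rw [mul_rpow hs.le (exp_pos _).le, ← exp_mul]; ring_nf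
    _ = s ^ (-q) * (1 - exp (-(q * y))) := by
        have hexp := exp_sub_one_eq_exp_half_mul_two_sinh_half (-(q * y))
        rw [neg_div, sinh_neg] at hexp
        rw [neg_div]
        linear_combination s ^ (-q) * hexp
    _ = s ^ (-q) - (s * exp y) ^ (-q) := by
        rw [mul_rpow hs.le (exp_pos _).le, ← exp_mul]; ring_nf
    _ ≤ s ^ (-q) - (s + y * M) ^ (-q) :=
        sub_le_sub_left (rpow_le_rpow_of_nonpos (by positivity) (by linarith) (neg_nonpos.2 hq)) _

lemma rpow_neg_mul_two_sinh_le_sum_rpow_sub {a q : ℝ} (ha : 0 < a) (hq : 0 ≤ q) {m : ℕ}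
    (hm : 1 ≤ m) :
    (((m : ℝ) + 1) ^ a / a) ^ (-q) * (2 * sinh (q * (a / ((m : ℝ) + 1)) / 2)) ≤
      (∑ k ∈ Finset.Icc 1 m, (k : ℝ) ^ (a - 1)) ^ (-q) -
        (∑ k ∈ Finset.Icc 1 (m + 1), (k : ℝ) ^ (a - 1)) ^ (-q) := by
  have hpos : 0 < ∑ k ∈ Finset.Icc 1 m, (k : ℝ) ^ (a - 1) :=
    Finset.sum_pos (fun k hk ↦ rpow_pos_of_pos (by exact_mod_cast (Finset.mem_Icc.1 hk).1) _)
      (Finset.nonempty_Icc.2 hm)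
  have hterm : ((m : ℝ) + 1) ^ (a - 1) = a / ((m : ℝ) + 1) * (((m : ℝ) + 1) ^ a / a) := by
    rw [rpow_sub_one (by positivity)]; field_simp
  have hgrowth := sum_rpow_mul_exp_sub_one_le ha.le m
  rw [hterm] at hgrowth
  rw [Finset.sum_Icc_succ_top (by omega), Nat.cast_succ, hterm]
  exact rpow_neg_mul_two_sinh_le hpos (by positivity) hq hgrowth

lemma hasSum_pow_two_mul_div_factorial {z : ℝ} (hz : z ≠ 0) :
    HasSum (fun k : ℕ ↦ z ^ (2 * k) / ((2 * k + 1).factorial : ℝ)) (sinh z / z) := by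
  refine ((hasSum_sinh z).div_const z).congr_fun fun k ↦ ?_
  rw [pow_succ]
  field_simp

lemma rpow_div_mul_tsum_eq_rpow_neg_mul_two_sinh {a r x : ℝ} (ha : 0 < a) (hr : r ≠ 0)
    (hx : 0 < x) :
    a ^ (1 + 1 / r) / (r * x ^ (1 + a / r)) *
        ∑' k : ℕ, a ^ (2 * k) / (2 ^ (2 * k) * r ^ (2 * k) * ((2 * k + 1).factorial : ℝ) *
          x ^ (2 * k)) =
      (x ^ a / a) ^ (-(1 / r)) * (2 * sinh (1 / r * (a / x) / 2)) := by
  set z := 1 / r * (a / x) / 2 with hz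
  have hseries : ∑' k : ℕ, a ^ (2 * k) / (2 ^ (2 * k) * r ^ (2 * k) *
      ((2 * k + 1).factorial : ℝ) * x ^ (2 * k)) = sinh z / z := by
    rw [← (hasSum_pow_two_mul_div_factorial (z := z) (by positivity)).tsum_eq]
    refine tsum_congr fun k ↦ ?_
    simp only [hz, div_pow, mul_pow, one_pow]
    field_simp
  rw [hseries, hz, rpow_neg (by positivity), div_rpow (by positivity) ha.le, ← rpow_mul hx.le,
    rpow_add ha, rpow_add hx, rpow_one, rpow_one, mul_one_div]
  field_simp

end

/-- Corollary 4.3 (full series form): for `p > 1`, `α > p - 1` and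
`S_n = ∑_{k=1}^n k^{α-p}`, for every `n ≥ 2` one has
`S_{n-1}^{-1/(p-1)} - S_n^{-1/(p-1)} ≥ ((α-p+1)^{p/(p-1)}/((p-1) n^{α/(p-1)})) ·
  ∑_{k=0}^∞ (α-p+1)^{2k}/(2^{2k}(p-1)^{2k}(2k+1)! n^{2k})`. -/
theorem stmt_11 (p α : ℝ) (hp : 1 < p) (hα : p - 1 < α)
    (S : ℕ → ℝ) (hS : ∀ n, S n = ∑ k ∈ Finset.Icc 1 n, (k : ℝ) ^ (α - p)) :
    ∀ n : ℕ, 2 ≤ n →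
      S (n - 1) ^ (-1 / (p - 1)) - S n ^ (-1 / (p - 1)) ≥
        (α - p + 1) ^ (p / (p - 1)) / ((p - 1) * (n : ℝ) ^ (α / (p - 1))) *
          ∑' k : ℕ, (α - p + 1) ^ (2 * k) /
            (2 ^ (2 * k) * (p - 1) ^ (2 * k) * (Nat.factorial (2 * k + 1) : ℝ) *
              (n : ℝ) ^ (2 * k)) := by
  intro n hn
  obtain ⟨m, rfl⟩ := Nat.exists_eq_add_of_le' (one_le_two.trans hn)
  have ha : 0 < α - p + 1 := by linarith
  have hr : 0 < p - 1 := sub_pos.2 hp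
  have hbound := rpow_neg_mul_two_sinh_le_sum_rpow_sub ha (one_div_pos.2 hr).le
    (Nat.le_of_succ_le_succ hn)
  have hp_div : p / (p - 1) = 1 + 1 / (p - 1) := by field_simp; ring
  have hα_div : α / (p - 1) = 1 + (α - p + 1) / (p - 1) := by field_simp; ring
  rw [add_sub_cancel_right] at hbound
  rw [hS, hS, Nat.add_sub_cancel, hp_div, hα_div, neg_div, Nat.cast_add_one,
    rpow_div_mul_tsum_eq_rpow_neg_mul_two_sinh ha hr.ne' (by positivity)]
  exact hbound
end
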